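/- arXiv:1909.07010 — 6 statements merged into one kernel-verified Lean document; each statement's English description precedes it below -/
import Mathlib

section
/- Let n ≥ 5 be an odd integer, ℓ ≥ 0 an integer, and let i = √(−1) ∈ ℂ. For every integer k, the number of tuples m ∈ X_D(n,ℓ) with σ^k·m = m equals the complex number ∑_{m ∈ X_D(n,ℓ)} i^{k·ev(m)}, where ev(m) = 2(m_1 + m_3 + ⋯ + m_{n−2}) + m_{n−1} + 3m_n (the first sum runs over odd indices from 1 to n−2). (This is the cyclic sieving phenomenon of type D_n^{(1)} for odd n.) -/
/-!
Summing `∏ i, c i ^ m i` over tuples with `∑ i, w i * m i = ℓ` gives the coefficient of `t ^ ℓ` in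
`∏ i, 1 / (1 - c i * t ^ w i)`. Hence two such sums agree as soon as the denominators do
(`wsum_eq_of_prod_eq`; the series are truncated and inverted modulo `t ^ (ℓ + 1)`).

With `q = i ^ k`, the right-hand side of the theorem is such a sum with `c = q ^ e`, where
`ev m = ∑ i, e i * m i`. A tuple fixed by `σ ^ k` is constant on the orbits of `υ ^ k`, so the
left-hand side is such a sum over tuples indexed by the orbits, with all `c = 1` and the weight of
an orbit equal to the sum of its dual marks (`card_fixed_eq_wsum`). It remains to compare
denominators, where `n = 2p + 3`:

* `k` odd, `q ^ 2 = -1`: `(1 - t)(1 + t)(1 - q t)(1 + q t) = 1 - t ^ 4` for the four end nodes and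
  `(1 - t ^ 2)(1 + t ^ 2) = 1 - t ^ 4` for each of the `p` pairs, against `p + 1` orbits of weight 4.
* `k ≡ 2 mod 4`, `q = -1`: `(1 - t) ^ 2 (1 + t) ^ 2 = (1 - t ^ 2) ^ 2` for the end nodes and
  `1 - t ^ 2` for every other node, against `2p + 2` orbits of weight 2.
* `k ≡ 0 mod 4`: both sides count all tuples.
-/

open Finset

/-- The sum of `∏ i, c i ^ m i` over the tuples `m` of natural numbers with `∑ i, w i * m i = ℓ`.
The entries of `m` are bounded by `ℓ`, which loses nothing when all weights are positive. -/
noncomputable def wsum {ι : Type*} [Fintype ι] [DecidableEq ι] (ℓ : ℕ) (w : ι → ℕ)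
    (c : ι → ℂ) : ℂ :=
  ∑ m ∈ (Fintype.piFinset fun _ : ι => range (ℓ + 1)).filter (fun m => ∑ i, w i * m i = ℓ),
    ∏ i, c i ^ m i

open Polynomial in
/-- The product of the truncated geometric series of `1 / (1 - c i * X ^ w i)`. -/
noncomputable def geomProd {ι : Type*} [Fintype ι] (ℓ : ℕ) (w : ι → ℕ) (c : ι → ℂ) : ℂ[X] :=
  ∏ i, ∑ j ∈ range (ℓ + 1), (C (c i) * X ^ w i) ^ j

lemma wsum_eq_coeff {ι : Type*} [Fintype ι] [DecidableEq ι] (ℓ : ℕ) (w : ι → ℕ) (c : ι → ℂ) :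
    wsum ℓ w c = (geomProd ℓ w c).coeff ℓ := by
  rw [wsum, geomProd, prod_univ_sum, Polynomial.finsetSum_coeff, sum_filter]
  refine sum_congr rfl fun m _ => ?_
  have : ∏ i, (Polynomial.C (c i) * Polynomial.X ^ w i) ^ m i
      = Polynomial.C (∏ i, c i ^ m i) * Polynomial.X ^ (∑ i, w i * m i) := by
    simp only [mul_pow, prod_mul_distrib, ← pow_mul, prod_pow_eq_pow_sum, map_prod, map_pow]
  rw [this, Polynomial.coeff_C_mul_X_pow]
  simp only [eq_comm]

open Polynomial in
/-- Modulo `X ^ (ℓ + 1)` the truncated geometric series invert the factors `1 - c i * X ^ w i`. -/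
lemma mk_geomProd_mul {ι : Type*} [Fintype ι] (ℓ : ℕ) (w : ι → ℕ) (hw : ∀ i, 0 < w i)
    (c : ι → ℂ) :
    Ideal.Quotient.mk (Ideal.span {(X : ℂ[X]) ^ (ℓ + 1)})
      (geomProd ℓ w c * ∏ i, (1 - C (c i) * X ^ w i)) = 1 := by
  rw [geomProd, ← prod_mul_distrib, map_prod]
  refine prod_eq_one fun i _ => ?_
  rw [geom_sum_mul_neg, ← map_one (Ideal.Quotient.mk _), Ideal.Quotient.eq,
    Ideal.mem_span_singleton]
  have : (X : ℂ[X]) ^ (ℓ + 1) ∣ (C (c i) * X ^ w i) ^ (ℓ + 1) := by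
    rw [mul_pow, ← pow_mul]
    exact Dvd.dvd.mul_left (pow_dvd_pow _ (Nat.le_mul_of_pos_left _ (hw i))) _
  simpa using this

open Polynomial in
/-- Weighted sums over tuples depend only on the denominator of their generating function. -/
lemma wsum_eq_of_prod_eq {ι κ : Type*} [Fintype ι] [DecidableEq ι] [Fintype κ] [DecidableEq κ]
    (ℓ : ℕ) (w : ι → ℕ) (c : ι → ℂ) (w' : κ → ℕ) (c' : κ → ℂ)
    (hw : ∀ i, 0 < w i) (hw' : ∀ i, 0 < w' i)
    (h : (∏ i, (1 - C (c i) * X ^ w i) : ℂ[X]) = ∏ i, (1 - C (c' i) * X ^ w' i)) :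
    wsum ℓ w c = wsum ℓ w' c' := by
  have h1 := mk_geomProd_mul ℓ w hw c
  have h2 := mk_geomProd_mul ℓ w' hw' c'
  rw [← h, map_mul] at h2
  rw [map_mul] at h1
  -- Both truncations are inverses of the same element of the quotient ring.
  have h3 := left_inv_eq_right_inv h1 ((mul_comm _ _).trans h2)
  rw [Ideal.Quotient.eq, Ideal.mem_span_singleton, X_pow_dvd_iff] at h3
  have := h3 ℓ (Nat.lt_succ_self ℓ)
  rw [coeff_sub, sub_eq_zero] at this
  rw [wsum_eq_coeff, wsum_eq_coeff, this]

/-- Tuples constant on the fibres of `r` are the same as tuples indexed by the codomain of `r`. -/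
lemma card_fixed_eq_wsum {ι κ : Type*} [Fintype ι] [DecidableEq ι] [Fintype κ] [DecidableEq κ]
    (ℓ : ℕ) (ν : ι → ℕ) (P : (ι → ℕ) → Prop) [DecidablePred P] (r : ι → κ) (s : κ → ι)
    (hrs : ∀ y, r (s y) = y) (hP : ∀ m, P m ↔ ∀ i, m (s (r i)) = m i) (w : κ → ℕ)
    (hsum : ∀ b : κ → ℕ, ∑ i, ν i * b (r i) = ∑ y, w y * b y) :
    ((((Fintype.piFinset fun _ : ι => range (ℓ + 1)).filter
      (fun m => ∑ i, ν i * m i = ℓ)).filter P).card : ℂ) = wsum ℓ w (fun _ => 1) := by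
  simp only [wsum, one_pow, prod_const_one, sum_const, nsmul_eq_mul, mul_one]
  congr 1
  refine card_nbij' (fun m y => m (s y)) (fun b i => b (r i)) ?_ ?_ ?_ ?_
  · intro m hm
    simp only [coe_filter, Set.mem_ofPred_eq, Fintype.mem_piFinset, mem_filter, hP] at hm ⊢
    refine ⟨fun y => hm.1.1 _, ?_⟩
    rw [← hsum (fun y => m (s y))]
    simpa only [hm.2] using hm.1.2
  · intro b hb
    simp only [coe_filter, Set.mem_ofPred_eq, Fintype.mem_piFinset, mem_filter, hP] at hb ⊢
    refine ⟨⟨fun i => hb.1 _, by rw [hsum, hb.2]⟩, fun i => by rw [hrs]⟩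
  · intro m hm
    simp only [coe_filter, Set.mem_ofPred_eq, mem_filter, hP] at hm
    funext i
    exact hm.2 i
  · intro b _
    funext y
    simp only [hrs]

@[to_additive]
lemma prod_pairs {M : Type*} [CommMonoid M] (q : ℕ) (f : Fin (2 * q) → M) :
    ∏ i, f i = ∏ j : Fin q, (f ⟨2 * j, by omega⟩ * f ⟨2 * j + 1, by omega⟩) := by
  induction q with
  | zero => simp
  | succ q ih =>
    have : ∏ i, f i = ∏ i : Fin (2 * q + 2), f i := rfl
    rw [this, Fin.prod_univ_castSucc, Fin.prod_univ_castSucc, ih, Fin.prod_univ_castSucc]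
    simp only [mul_assoc]
    rfl

/-- Splits a product (or, as `sum_nodes`, a sum) over the nodes `0, …, 2p+3` into the end nodes and the pairs
`{2j+2, 2j+3}`. -/
@[to_additive]
lemma prod_nodes {M : Type*} [CommMonoid M] (p : ℕ) (f : Fin (2 * p + 3 + 1) → M) :
    ∏ i, f i = (f ⟨0, by omega⟩ * f ⟨1, by omega⟩ * f ⟨2 * p + 2, by omega⟩
        * f ⟨2 * p + 3, by omega⟩) *
      ∏ j : Fin p, (f ⟨2 * j + 2, by omega⟩ * f ⟨2 * j + 3, by omega⟩) := by
  have h := prod_pairs (p + 2) f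
  rw [Fin.prod_univ_succ, Fin.prod_univ_castSucc] at h
  refine h.trans ?_
  have e : ∀ (a b c d x : M), a * b * (x * (c * d)) = a * b * c * d * x := by
    intro a b c d x; simp only [mul_left_comm, mul_comm]
  exact e _ _ _ _ _

/-- **Cyclic sieving phenomenon for type `D_n^(1)`, `n` odd.**
Let `n ≥ 5` be odd and `ℓ ≥ 0`. Let `X_D(n,ℓ)` be the set of `(n+1)`-tuples `m` of
nonnegative integers with `m_0 + m_1 + 2(m_2 + ⋯ + m_{n-2}) + m_{n-1} + m_n = ℓ`, and let
`υ` be the order-4 permutation `(0,n,1,n-1)(2,3)⋯(n-3,n-2)` acting on tuples by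
`(σ·m)_j = m_{υ(j)}`. Then for every integer `k`, the number of `m ∈ X_D(n,ℓ)` fixed by
`σ^k` equals `∑_m i^(k·ev(m))` where
`ev(m) = 2(m_1 + m_3 + ⋯ + m_{n-2}) + m_{n-1} + 3 m_n`. -/
theorem stmt_7 (n ℓ : ℕ) (hn : 5 ≤ n) (hodd : Odd n) (k : ℤ)
    (υ : Equiv.Perm (Fin (n + 1)))
    (h0 : υ 0 = Fin.last n)
    (hlast : υ (Fin.last n) = ⟨1, by omega⟩)
    (h1 : υ ⟨1, by omega⟩ = ⟨n - 1, by omega⟩)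
    (hn1 : υ ⟨n - 1, by omega⟩ = 0)
    (hswap : ∀ j : ℕ, ∀ _h1 : 1 ≤ j, ∀ _h2 : 2 * j + 1 ≤ n - 2,
      υ ⟨2 * j, by omega⟩ = ⟨2 * j + 1, by omega⟩ ∧
      υ ⟨2 * j + 1, by omega⟩ = ⟨2 * j, by omega⟩) :
    let ν : Fin (n + 1) → ℕ := fun i =>
      if (i : ℕ) = 0 ∨ (i : ℕ) = 1 ∨ (i : ℕ) = n - 1 ∨ (i : ℕ) = n then 1 else 2
    let X : Finset (Fin (n + 1) → ℕ) :=
      (Fintype.piFinset fun _ => Finset.range (ℓ + 1)).filter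
        (fun m => ∑ i, ν i * m i = ℓ)
    let σ : Equiv.Perm (Fin (n + 1) → ℕ) := (Equiv.arrowCongr υ (Equiv.refl ℕ)).symm
    let ev : (Fin (n + 1) → ℕ) → ℕ := fun m =>
      2 * (∑ i ∈ Finset.univ.filter
            (fun i : Fin (n + 1) => (i : ℕ) % 2 = 1 ∧ (i : ℕ) ≤ n - 2), m i)
        + m ⟨n - 1, by omega⟩ + 3 * m (Fin.last n)
    ((X.filter (fun m => (σ ^ k) m = m)).card : ℂ)
      = ∑ m ∈ X, Complex.I ^ (k * (ev m : ℤ)) := by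
  intro ν X σ ev
  obtain ⟨p, rfl⟩ : ∃ p, n = 2 * p + 3 := by
    obtain ⟨t, rfl⟩ := hodd
    exact ⟨t - 1, by omega⟩
  have hν : ∀ i, 0 < ν i := by intro i; simp only [ν]; split_ifs <;> norm_num
  have cases_i : ∀ i : Fin (2 * p + 3 + 1), i = ⟨0, by omega⟩ ∨ i = ⟨1, by omega⟩ ∨
      i = ⟨2 * p + 2, by omega⟩ ∨ i = ⟨2 * p + 3, by omega⟩ ∨
      (∃ j : Fin p, i = ⟨2 * j + 2, by omega⟩) ∨ ∃ j : Fin p, i = ⟨2 * j + 3, by omega⟩ := by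
    rintro ⟨i, hi⟩
    simp only [Fin.mk.injEq]
    by_cases h : i = 0 ∨ i = 1 ∨ i = 2 * p + 2 ∨ i = 2 * p + 3
    · tauto
    · rcases Nat.even_or_odd' i with ⟨t, rfl | rfl⟩
      · exact .inr <| .inr <| .inr <| .inr <| .inl ⟨⟨t - 1, by omega⟩, by grind⟩
      · exact .inr <| .inr <| .inr <| .inr <| .inr ⟨⟨t - 1, by omega⟩, by grind⟩
  have u0 : υ ⟨0, by omega⟩ = ⟨2 * p + 3, by omega⟩ := h0
  have u1 : υ ⟨1, by omega⟩ = ⟨2 * p + 2, by omega⟩ := h1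
  have u2 : υ ⟨2 * p + 2, by omega⟩ = ⟨0, by omega⟩ := hn1
  have u3 : υ ⟨2 * p + 3, by omega⟩ = ⟨1, by omega⟩ := hlast
  have u4 : ∀ j : Fin p, υ ⟨2 * j + 2, by omega⟩ = ⟨2 * j + 3, by omega⟩ := fun j =>
    (hswap (j + 1) (by omega) (by omega)).1
  have u5 : ∀ j : Fin p, υ ⟨2 * j + 3, by omega⟩ = ⟨2 * j + 2, by omega⟩ := fun j =>
    (hswap (j + 1) (by omega) (by omega)).2
  have hσ : ∀ m i, σ m i = m (υ i) := fun m i => rfl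
  have hσ4 : σ ^ 4 = 1 := by
    ext m i
    simp only [pow_succ, pow_zero, one_mul, Equiv.Perm.mul_apply, hσ, Equiv.Perm.one_apply]
    rcases cases_i i with rfl | rfl | rfl | rfl | ⟨j, rfl⟩ | ⟨j, rfl⟩ <;>
      simp only [u0, u1, u2, u3, u4, u5]
  have hσk : σ ^ k = σ ^ (k % 4) := by
    conv_lhs => rw [← Int.emod_add_mul_ediv k 4, zpow_add, zpow_mul]
    have : σ ^ (4 : ℤ) = 1 := by exact_mod_cast hσ4
    rw [this, one_zpow, mul_one]
  have hIk : Complex.I ^ k = Complex.I ^ (k % 4) := by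
    conv_lhs => rw [← Int.emod_add_mul_ediv k 4, zpow_add₀ Complex.I_ne_zero, zpow_mul]
    have : Complex.I ^ (4 : ℤ) = 1 := by exact_mod_cast Complex.I_pow_four
    rw [this, one_zpow, mul_one]
  let e : Fin (2 * p + 3 + 1) → ℕ := fun i =>
    (if (i : ℕ) % 2 = 1 ∧ (i : ℕ) ≤ 2 * p + 3 - 2 then 2 else 0)
      + (if i = ⟨2 * p + 3 - 1, by omega⟩ then 1 else 0) + (if i = Fin.last _ then 3 else 0)
  have hev : ∀ m, ev m = ∑ i, e i * m i := by
    intro m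
    simp only [ev, e, add_mul, sum_add_distrib, ite_mul, zero_mul, sum_ite_eq', mem_univ, if_true,
      one_mul, mul_sum, sum_filter]
    simp only [mul_ite, mul_zero]
  -- The right-hand side as a weighted sum with weights `(i ^ k) ^ e`.
  have hR : ∑ m ∈ X, Complex.I ^ (k * (ev m : ℤ)) = wsum ℓ ν fun i => (Complex.I ^ k) ^ e i := by
    refine sum_congr rfl fun m _ => ?_
    rw [zpow_mul, zpow_natCast, hev, ← prod_pow_eq_pow_sum]
    simp only [pow_mul]
  rw [hR, hIk, hσk]
  have ν0 : ν ⟨0, by omega⟩ = 1 := by simp [ν]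
  have ν1 : ν ⟨1, by omega⟩ = 1 := by simp [ν]
  have ν2 : ν ⟨2 * p + 2, by omega⟩ = 1 := by simp [ν]
  have ν3 : ν ⟨2 * p + 3, by omega⟩ = 1 := by simp [ν]
  have ν4 : ∀ j : Fin p, ν ⟨2 * j + 2, by omega⟩ = 2 := fun j => if_neg (by simp; omega)
  have ν5 : ∀ j : Fin p, ν ⟨2 * j + 3, by omega⟩ = 2 := fun j => if_neg (by simp; omega)
  have e0 : e ⟨0, by omega⟩ = 0 := by simp [e, Fin.ext_iff]
  have e1 : e ⟨1, by omega⟩ = 2 := by simp [e, Fin.ext_iff]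
  have e2 : e ⟨2 * p + 2, by omega⟩ = 1 := by simp [e, Fin.ext_iff]
  have e3 : e ⟨2 * p + 3, by omega⟩ = 3 := by simp [e, Fin.ext_iff]
  have e4 : ∀ j : Fin p, e ⟨2 * j + 2, by omega⟩ = 0 := fun j => by
    simp only [e, Fin.ext_iff, Fin.val_last]
    rw [if_neg (by omega), if_neg (by omega), if_neg (by omega)]
  have e5 : ∀ j : Fin p, e ⟨2 * j + 3, by omega⟩ = 2 := fun j => by
    simp only [e, Fin.ext_iff, Fin.val_last]
    rw [if_pos (by omega), if_neg (by omega), if_neg (by omega)]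
  -- For odd `k`, fixed tuples are those constant on `{0, 1, n-1, n}` and on each `{2j, 2j+1}`.
  have odd_case : ∀ (g : Equiv.Perm (Fin (2 * p + 3 + 1) → ℕ)) (q : ℂ), q ^ 2 = -1 →
      (∀ m, g m = m ↔ σ m = m) →
      ((X.filter (fun m => g m = m)).card : ℂ) = wsum ℓ ν fun i => q ^ e i := by
    intro g q hq hg
    let r : Fin (2 * p + 3 + 1) → Fin (p + 1) := fun i =>
      if h : (i : ℕ) < 2 * p + 2 then ⟨(i : ℕ) / 2, by omega⟩ else 0
    let s : Fin (p + 1) → Fin (2 * p + 3 + 1) := fun y => ⟨2 * y, by omega⟩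
    have r0 : r ⟨0, by omega⟩ = 0 := by simp [r]
    have r1 : r ⟨1, by omega⟩ = 0 := by simp [r]
    have r2 : r ⟨2 * p + 2, by omega⟩ = 0 := by simp [r]
    have r3 : r ⟨2 * p + 3, by omega⟩ = 0 := by simp [r]
    have r4 : ∀ j : Fin p, r ⟨2 * j + 2, by omega⟩ = j.succ := fun j => by
      simp only [r]; rw [dif_pos (by omega)]; ext; simp
    have r5 : ∀ j : Fin p, r ⟨2 * j + 3, by omega⟩ = j.succ := fun j => by
      simp only [r]; rw [dif_pos (by omega)]; ext; simp; omega
    have s0 : s 0 = ⟨0, by omega⟩ := by ext; simp [s]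
    have s1 : ∀ j : Fin p, s j.succ = ⟨2 * j + 2, by omega⟩ := fun j => by
      ext; simp [s]; omega
    refine (card_fixed_eq_wsum ℓ ν (fun m => g m = m) r s ?_ ?_ (fun _ => 4) ?_).trans ?_
    · intro y
      refine Fin.cases ?_ (fun j => ?_) y
      · rw [s0, r0]
      · rw [s1, r4]
    · intro m
      rw [hg, funext_iff]
      simp only [hσ]
      constructor
      · intro h i
        have a0 := h ⟨0, by omega⟩
        have a1 := h ⟨1, by omega⟩
        have a2 := h ⟨2 * p + 2, by omega⟩
        rw [u0] at a0
        rw [u1] at a1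
        rw [u2] at a2
        rcases cases_i i with rfl | rfl | rfl | rfl | ⟨j, rfl⟩ | ⟨j, rfl⟩
        · rw [r0, s0]
        · rw [r1, s0, a2, a1]
        · rw [r2, s0, a2]
        · rw [r3, s0, a0]
        · rw [r4, s1]
        · have := h ⟨2 * j + 2, by omega⟩
          rw [u4] at this
          rw [r5, s1, this]
      · intro h i
        have a1 := h ⟨1, by omega⟩
        have a2 := h ⟨2 * p + 2, by omega⟩
        have a3 := h ⟨2 * p + 3, by omega⟩
        rw [r1, s0] at a1
        rw [r2, s0] at a2
        rw [r3, s0] at a3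
        rcases cases_i i with rfl | rfl | rfl | rfl | ⟨j, rfl⟩ | ⟨j, rfl⟩
        · rw [u0, a3]
        · rw [u1, ← a2, a1]
        · rw [u2, a2]
        · rw [u3, ← a1, a3]
        · have := h ⟨2 * j + 3, by omega⟩
          rw [r5, s1] at this
          rw [u4, this]
        · have := h ⟨2 * j + 3, by omega⟩
          rw [r5, s1] at this
          rw [u5, this]
    · intro b
      rw [sum_nodes, Fin.sum_univ_succ]
      simp only [r0, r1, r2, r3, r4, r5, ν0, ν1, ν2, ν3, ν4, ν5, ← add_mul]
    · refine wsum_eq_of_prod_eq ℓ _ _ _ _ (fun _ => by norm_num) hν ?_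
      rw [prod_nodes, Fin.prod_univ_succ]
      simp only [ν0, ν1, ν2, ν3, ν4, ν5, e0, e1, e2, e3, e4, e5]
      have hC : (Polynomial.C q) ^ 2 = -1 := by
        rw [← map_pow, hq, map_neg, map_one]
      congr 1
      · simp only [map_pow, map_one, pow_zero, pow_one, hC]
        rw [pow_succ (Polynomial.C q) 2, hC]
        linear_combination (Polynomial.X ^ 2 - Polynomial.X ^ 4) * hC
      · refine prod_congr rfl fun j _ => ?_
        simp only [map_pow, map_one, pow_zero, hC]
        ring
  have hk : k % 4 = 0 ∨ k % 4 = 1 ∨ k % 4 = 2 ∨ k % 4 = 3 := by omega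
  rcases hk with hk | hk | hk | hk <;> rw [hk]
  · simp [wsum, X]
  · rw [zpow_one]
    exact odd_case _ _ (by simp) (fun m => Iff.rfl)
  · have hI : Complex.I ^ (2 : ℤ) = -1 := by
      rw [show (2 : ℤ) = ((2 : ℕ) : ℤ) from rfl, zpow_natCast, Complex.I_sq]
    rw [hI]
    -- Tuples fixed by `σ ^ 2` are those constant on `{0, 1}` and on `{n-1, n}`; these two
    -- classes are labelled `0` and `1`, and every other node keeps its own label.
    let r : Fin (2 * p + 3 + 1) → Fin (2 * (p + 1)) := fun i =>
      if h : (i : ℕ) < 2 then ⟨0, by omega⟩ else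
        if h : (i : ℕ) < 2 * p + 2 then ⟨i, by omega⟩ else ⟨1, by omega⟩
    let s : Fin (2 * (p + 1)) → Fin (2 * p + 3 + 1) := fun y =>
      if (y : ℕ) = 1 then ⟨2 * p + 2, by omega⟩ else ⟨y, by omega⟩
    have r0 : r ⟨0, by omega⟩ = ⟨0, by omega⟩ := by simp [r]
    have r1 : r ⟨1, by omega⟩ = ⟨0, by omega⟩ := by simp [r]
    have r2 : r ⟨2 * p + 2, by omega⟩ = ⟨1, by omega⟩ := by simp [r]
    have r3 : r ⟨2 * p + 3, by omega⟩ = ⟨1, by omega⟩ := by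
      simp only [r]; rw [dif_neg (by omega), dif_neg (by omega)]
    have r4 : ∀ j : Fin p, r ⟨2 * j + 2, by omega⟩ = ⟨2 * j + 2, by omega⟩ := fun j => by
      simp only [r]; rw [dif_neg (by omega), dif_pos (by omega)]
    have r5 : ∀ j : Fin p, r ⟨2 * j + 3, by omega⟩ = ⟨2 * j + 3, by omega⟩ := fun j => by
      simp only [r]; rw [dif_neg (by omega), dif_pos (by omega)]
    have s0 : s ⟨0, by omega⟩ = ⟨0, by omega⟩ := by simp [s]
    have s1 : s ⟨1, by omega⟩ = ⟨2 * p + 2, by omega⟩ := if_pos rfl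
    have s4 : ∀ j : Fin p, s ⟨2 * j + 2, by omega⟩ = ⟨2 * j + 2, by omega⟩ := fun j => by
      simp only [s]; rw [if_neg (by omega)]
    have s5 : ∀ j : Fin p, s ⟨2 * j + 3, by omega⟩ = ⟨2 * j + 3, by omega⟩ := fun j => by
      simp only [s]; rw [if_neg (by omega)]
    refine (card_fixed_eq_wsum ℓ ν (fun m => (σ ^ (2 : ℤ)) m = m) r s ?_ ?_
      (fun _ => 2) ?_).trans ?_
    · rintro ⟨y, hy⟩
      by_cases hy0 : y = 0
      · subst hy0; rw [s0, r0]
      by_cases hy1 : y = 1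
      · subst hy1; rw [s1, r2]
      simp only [s, r, if_neg hy1]
      rw [dif_neg (by omega), dif_pos (by omega)]
    · intro m
      have h2 : σ ^ (2 : ℤ) = σ * σ := zpow_two σ
      rw [h2, Equiv.Perm.mul_apply, funext_iff]
      simp only [hσ]
      constructor
      · intro h i
        have a0 := h ⟨0, by omega⟩
        have a2 := h ⟨2 * p + 2, by omega⟩
        rw [u0, u3] at a0
        rw [u2, u0] at a2
        rcases cases_i i with rfl | rfl | rfl | rfl | ⟨j, rfl⟩ | ⟨j, rfl⟩
        · rw [r0, s0]
        · rw [r1, s0, a0]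
        · rw [r2, s1]
        · rw [r3, s1, a2]
        · rw [r4, s4]
        · rw [r5, s5]
      · intro h i
        have a1 := h ⟨1, by omega⟩
        have a3 := h ⟨2 * p + 3, by omega⟩
        rw [r1, s0] at a1
        rw [r3, s1] at a3
        rcases cases_i i with rfl | rfl | rfl | rfl | ⟨j, rfl⟩ | ⟨j, rfl⟩
        · rw [u0, u3, a1]
        · rw [u1, u2, a1]
        · rw [u2, u0, a3]
        · rw [u3, u1, a3]
        · rw [u4, u5]
        · rw [u5, u4]
    · intro b
      rw [sum_nodes, sum_pairs, Fin.sum_univ_succ]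
      simp only [r0, r1, r2, r3, r4, r5, ν0, ν1, ν2, ν3, ν4, ν5]
      refine congrArg₂ (· + ·) ?_ rfl
      simp only [Fin.val_zero, mul_zero, zero_add]
      ring
    · refine wsum_eq_of_prod_eq ℓ _ _ _ _ (fun _ => by norm_num) hν ?_
      rw [prod_nodes, prod_pairs, Fin.prod_univ_succ]
      simp only [ν0, ν1, ν2, ν3, ν4, ν5, e0, e1, e2, e3, e4, e5]
      congr 1
      · simp only [map_pow, map_neg, map_one]
        ring
      · refine prod_congr rfl fun j _ => ?_
        simp
  · refine odd_case _ _ ?_ (fun m => ?_)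
    · rw [show (3 : ℤ) = ((3 : ℕ) : ℤ) from rfl, zpow_natCast, Complex.I_pow_three]
      simp
    · -- `σ ^ 3` is the inverse of `σ`, so it has the same fixed points.
      have h3 : σ ^ (3 : ℤ) = σ⁻¹ := by
        rw [eq_inv_iff_mul_eq_one, ← zpow_add_one]
        exact_mod_cast hσ4
      rw [h3, Equiv.Perm.inv_eq_iff_eq, eq_comm]
end

section
/- Let n ≥ 4 be an even integer and ℓ ≥ 0 an integer. For all integers k_1 and k_2, the number of tuples m ∈ X_D(n,ℓ) with σ_1^{k_1}σ_2^{k_2}·m = m equals ∑_{m ∈ X_D(n,ℓ)} (−1)^{k_1·(m_{n−1}+m_n) + k_2·(m_1 + m_3 + ⋯ + m_{n−1})}, where the second exponent sum runs over the odd indices from 1 to n−1. (This is the bicyclic sieving phenomenon of type D_n^{(1)} for even n.) -/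
open Finset

/-!
Both sides depend only on the parities of `k₁, k₂`, since `σ₁, σ₂` are involutions; so there are
four cases, and each nontrivial one compares the fixed points of an involution `υ` of the index set
with a signed sum over tuples.

The key fact is `card_fixed_eq_signed_sum`: if `υ` preserves the weights and `S` picks exactly one
element from every 2-cycle of `υ` and no fixed point, then the number of `υ`-invariant tuples of
weighted degree `ℓ` is `∑ (-1)^(∑_{i ∈ S} m i)`. To see it, fix the symmetrisation `N = m + m ∘ υ`.
The tuples with given `N` are parametrised by the free choices `0 ≤ m i ≤ N i`, `i ∈ S`, so the
signed sum over them is `∏_{i ∈ S} ∑_{y ≤ N i} (-1)^y`, which is `1` if all `N i` are even and `0`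
otherwise (`sum_fiber`). An invariant tuple has `N = 2 m`, so there is exactly one of them when all
`N i` are even and none otherwise (`card_fiber_fixed`).

For `υ₁` take `S = {n-1, n}`, for `υ₂` take `S` the odd indices. For the product, whose 2-cycles
include `(0, n-1)` and `(1, n)`, the sign set is `{1, 3, …, n-3} ∪ {n}`, which is not such a
transversal; relabelling the tuples by the weight-preserving transposition `(1, n-1)` turns it into
`{3, …, n-3} ∪ {n-1, n}`, which is.
-/

/-! ### Sieving for one weight-preserving involution -/

section Sieving

variable {ι : Type*} [Fintype ι]

lemma sum_range_neg_one_pow (N : ℕ) :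
    ∑ y ∈ Finset.range (N + 1), (-1 : ℚ) ^ y = if Even N then 1 else 0 := by
  rw [neg_one_geom_sum]
  simp only [Nat.even_add_one]
  split_ifs <;> simp_all

/-- The weight of the symmetrisation `m + m ∘ υ` is twice that of `m`, so tuples with equal
symmetrisations have equal weights. -/
lemma two_mul_weight (ν : ι → ℕ) (υ : Equiv.Perm ι) (hν : ∀ i, ν (υ i) = ν i) (m : ι → ℕ) :
    ∑ i, ν i * (m i + m (υ i)) = 2 * ∑ i, ν i * m i := by
  have h : ∑ i, ν i * m (υ i) = ∑ i, ν i * m i := by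
    rw [← Equiv.sum_comp υ (fun i => ν i * m i)]
    simp [hν]
  simp only [mul_add, Finset.sum_add_distrib, h]
  ring

/-- Relabelling the tuples by a weight-preserving permutation moves the sign set. -/
lemma signed_sum_map (ν : ι → ℕ) (π : Equiv.Perm ι) (hν : ∀ i, ν (π i) = ν i) (S : Finset ι)
    (ℓ : ℕ) (X : Finset (ι → ℕ)) (hX : ∀ m, m ∈ X ↔ ∑ i, ν i * m i = ℓ) :
    ∑ m ∈ X, (-1 : ℚ) ^ (∑ i ∈ S.map π.toEmbedding, m i)
      = ∑ m ∈ X, (-1 : ℚ) ^ (∑ i ∈ S, m i) := by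
  refine Finset.sum_equiv (Equiv.arrowCongr π (Equiv.refl ℕ)).symm (fun m => ?_) (fun m _ => ?_)
  · rw [hX, hX, ← Equiv.sum_comp π (fun i => ν i * m i)]
    simp [hν, Equiv.arrowCongr]
  · simp [Equiv.arrowCongr, Finset.sum_map]

/-- The invariant tuple with symmetrisation `N` is `N / 2`, when this is integral. -/
lemma card_fiber_fixed (ν : ι → ℕ) (υ : Equiv.Perm ι) (h2 : ∀ i, υ (υ i) = i)
    (hν : ∀ i, ν (υ i) = ν i) (ℓ : ℕ) (X : Finset (ι → ℕ))
    (hX : ∀ m, m ∈ X ↔ ∑ i, ν i * m i = ℓ) (N m₀ : ι → ℕ) (hm₀ : m₀ ∈ X)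
    (hN : ∀ i, m₀ i + m₀ (υ i) = N i) :
    ∑ m ∈ X with (fun i => m i + m (υ i)) = N, (if (fun i => m (υ i)) = m then (1 : ℚ) else 0)
      = if ∀ i, Even (N i) then 1 else 0 := by
  have hNυ : ∀ i, N (υ i) = N i := fun i => by rw [← hN, ← hN, h2, add_comm]
  split_ifs with h
  · have hdiv : ∀ i, N i / 2 + N i / 2 = N i := fun i => by
      obtain ⟨r, hr⟩ := h i
      omega
    rw [Finset.sum_eq_single (fun i => N i / 2)]
    · simp [hNυ]
    · intro m hm hne
      rw [Finset.mem_filter] at hm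
      rw [if_neg]
      intro hfix
      apply hne
      funext i
      have h3 := congrFun hm.2 i
      have h4 := congrFun hfix i
      omega
    · intro hnot
      exfalso
      apply hnot
      rw [Finset.mem_filter, hX]
      refine ⟨?_, by funext i; simp only [hNυ, hdiv]⟩
      have e1 := two_mul_weight ν υ hν (fun i => N i / 2)
      have e2 := two_mul_weight ν υ hν m₀
      have e3 := (hX m₀).1 hm₀
      simp only [hNυ, hdiv] at e1
      simp only [hN] at e2
      omega
  · apply Finset.sum_eq_zero
    intro m hm
    rw [Finset.mem_filter] at hm
    rw [if_neg]
    intro hfix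
    apply h
    intro i
    have h3 := congrFun hm.2 i
    have h4 := congrFun hfix i
    exact ⟨m i, by omega⟩

variable [DecidableEq ι]

/-- The signed sum over the tuples with symmetrisation `m₀ + m₀ ∘ υ`: it factors over the
transversal `S` into alternating sums of length `N i + 1`. -/
lemma sum_fiber (ν : ι → ℕ) (υ : Equiv.Perm ι) (h2 : ∀ i, υ (υ i) = i)
    (hν : ∀ i, ν (υ i) = ν i) (S : Finset ι) (hS : ∀ i, υ i = i → i ∉ S)
    (hS' : ∀ i, υ i ≠ i → (υ i ∈ S ↔ i ∉ S)) (ℓ : ℕ) (X : Finset (ι → ℕ))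
    (hX : ∀ m, m ∈ X ↔ ∑ i, ν i * m i = ℓ) (N m₀ : ι → ℕ) (hm₀ : m₀ ∈ X)
    (hN : ∀ i, m₀ i + m₀ (υ i) = N i) :
    ∑ m ∈ X with (fun i => m i + m (υ i)) = N, (-1 : ℚ) ^ (∑ i ∈ S, m i)
      = if ∀ i, Even (N i) then 1 else 0 := by
  have hNυ : ∀ i, N (υ i) = N i := fun i => by rw [← hN, ← hN, h2, add_comm]
  have hNfix : ∀ i, υ i = i → N i = 2 * m₀ i := fun i hi => by rw [← hN, hi]; ring
  have hprod := Finset.prod_univ_sum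
    (fun i => if i ∈ S then Finset.range (N i + 1) else {0})
    (fun i (y : ℕ) => if i ∈ S then (-1 : ℚ) ^ y else 1)
  -- Off `S` the evenness of `N i` is automatic: `N` is `υ`-invariant, and even at fixed points.
  have hL : ∏ i, ∑ y ∈ (if i ∈ S then Finset.range (N i + 1) else {0}),
      (if i ∈ S then (-1 : ℚ) ^ y else 1) = if ∀ i, Even (N i) then 1 else 0 := by
    have h1 : ∀ i, ∑ y ∈ (if i ∈ S then Finset.range (N i + 1) else {0}),
      (if i ∈ S then (-1 : ℚ) ^ y else 1) = if (i ∈ S → Even (N i)) then 1 else 0 := by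
      intro i
      by_cases hi : i ∈ S
      · simp only [hi, if_true, sum_range_neg_one_pow, true_imp_iff]
      · simp [hi]
    simp only [h1, Finset.prod_ite_zero, Finset.prod_const_one, Finset.mem_univ, true_imp_iff]
    refine if_congr ⟨fun h i => ?_, fun h i _ => h i⟩ rfl rfl
    by_cases hi : υ i = i
    · rw [hNfix i hi]; exact even_two_mul _
    · by_cases hiS : i ∈ S
      · exact h i hiS
      · rw [← hNυ]; exact h _ ((hS' i hi).2 hiS)
  rw [← hL, hprod]
  refine Finset.sum_bij'
    (fun m _ i => if i ∈ S then m i else 0)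
    (fun y _ i => if i ∈ S then y i else if υ i ∈ S then N i - y (υ i) else N i / 2)
    ?_ ?_ ?_ ?_ ?_
  · intro m hm
    simp only [Finset.mem_filter] at hm
    rw [Fintype.mem_piFinset]
    intro i
    have := congrFun hm.2 i
    by_cases hi : i ∈ S
    · simp only [hi, if_true, Finset.mem_range]; omega
    · simp [hi]
  · intro y hy
    rw [Fintype.mem_piFinset] at hy
    have hyS : ∀ i ∈ S, y i ≤ N i := fun i hi => by
      have := hy i
      simp only [hi, if_true, Finset.mem_range] at this
      omega
    have key : (fun i => (if i ∈ S then y i else if υ i ∈ S then N i - y (υ i) else N i / 2)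
        + (if υ i ∈ S then y (υ i) else if υ (υ i) ∈ S then N (υ i) - y (υ (υ i))
            else N (υ i) / 2)) = N := by
      funext i
      simp only [h2, hNυ]
      by_cases hi : υ i = i
      · have := hNfix i hi
        simp only [hi, hS i hi, if_false]
        omega
      · have := hS' i hi
        by_cases hiS : i ∈ S
        · have := hyS i hiS
          have h3 : υ i ∉ S := fun h => (hS' i hi).1 h hiS
          simp only [hiS, h3, if_true, if_false]
          omega
        · have h3 := this.2 hiS
          have := hyS _ h3
          rw [hNυ] at this
          simp only [hiS, h3, if_true, if_false]
          omega
    rw [Finset.mem_filter, hX]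
    refine ⟨?_, key⟩
    have e1 := two_mul_weight ν υ hν
      (fun i => if i ∈ S then y i else if υ i ∈ S then N i - y (υ i) else N i / 2)
    have e2 := two_mul_weight ν υ hν m₀
    have e3 := (hX m₀).1 hm₀
    have e4 : ∀ i, _ = _ := congrFun key
    simp only [e4] at e1
    simp only [hN] at e2
    omega
  · intro m hm
    simp only [Finset.mem_filter] at hm
    funext i
    have h := congrFun hm.2 i
    by_cases hi : i ∈ S
    · simp [hi]
    · by_cases hυ : υ i ∈ S
      · simp only [hi, hυ, if_true, if_false]; omega
      · have : υ i = i := by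
          by_contra hne
          exact hυ ((hS' i hne).2 hi)
        rw [this] at h
        simp only [hi, hυ, if_false]; omega
  · intro y hy
    rw [Fintype.mem_piFinset] at hy
    funext i
    have := hy i
    by_cases hi : i ∈ S
    · simp [hi]
    · simp only [hi, if_false, Finset.mem_singleton] at this ⊢
      exact this.symm
  · intro m _
    rw [← Finset.prod_pow_eq_pow_sum]
    simp only [Finset.prod_ite_mem, Finset.univ_inter]
    exact Finset.prod_congr rfl fun i hi => by rw [if_pos hi]

/-- If `S` contains exactly one element of each 2-cycle of the weight-preserving involution `υ`,
and no fixed point, then sieving holds for `υ` with the statistic `∑_{i ∈ S} m i`. -/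
lemma card_fixed_eq_signed_sum (ν : ι → ℕ) (υ : Equiv.Perm ι) (h2 : ∀ i, υ (υ i) = i)
    (hν : ∀ i, ν (υ i) = ν i) (S : Finset ι) (hS : ∀ i, υ i = i → i ∉ S)
    (hS' : ∀ i, υ i ≠ i → (υ i ∈ S ↔ i ∉ S)) (ℓ : ℕ) (X : Finset (ι → ℕ))
    (hX : ∀ m, m ∈ X ↔ ∑ i, ν i * m i = ℓ) :
    ((X.filter fun m => (fun i => m (υ i)) = m).card : ℚ)
      = ∑ m ∈ X, (-1 : ℚ) ^ (∑ i ∈ S, m i) := by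
  rw [Finset.card_filter]
  push_cast
  rw [← Finset.sum_fiberwise_of_maps_to
      (fun m hm => Finset.mem_image_of_mem (fun m i => m i + m (υ i)) hm),
    ← Finset.sum_fiberwise_of_maps_to (s := X)
      (fun m hm => Finset.mem_image_of_mem (fun m i => m i + m (υ i)) hm)]
  refine Finset.sum_congr rfl fun N hN => ?_
  obtain ⟨m₀, hm₀, rfl⟩ := Finset.mem_image.1 hN
  rw [sum_fiber ν υ h2 hν S hS hS' ℓ X hX _ m₀ hm₀ fun _ => rfl,
    card_fiber_fixed ν υ h2 hν ℓ X hX _ m₀ hm₀ fun _ => rfl]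

end Sieving

/-! ### The bicyclic action -/

set_option maxHeartbeats 2000000 in
/-- **Bicyclic sieving phenomenon for type `D_n^(1)`, `n` even.**
Let `n ≥ 4` be even and `ℓ ≥ 0`. Let `X_D(n,ℓ)` be the set of `(n+1)`-tuples `m` of
nonnegative integers with `m_0 + m_1 + 2(m_2 + ⋯ + m_{n-2}) + m_{n-1} + m_n = ℓ`. Let `υ₁`
be the permutation `(0,n)(1,n-1)` and `υ₂` the permutation `(0,1)(2,3)⋯(n-4,n-3)(n-1,n)`,
acting on tuples by `(σ_t·m)_j = m_{υ_t(j)}`. Then for all integers `k₁, k₂`, the number of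
`m ∈ X_D(n,ℓ)` fixed by `σ₁^{k₁} σ₂^{k₂}` equals
`∑_m (-1)^(k₁·(m_{n-1}+m_n) + k₂·(m_1 + m_3 + ⋯ + m_{n-1}))`. -/
theorem stmt_8 (n ℓ : ℕ) (hn : 4 ≤ n) (heven : Even n) (k₁ k₂ : ℤ)
    (υ₁ υ₂ : Equiv.Perm (Fin (n + 1)))
    (hυ₁a : υ₁ 0 = Fin.last n) (hυ₁b : υ₁ (Fin.last n) = 0)
    (hυ₁c : υ₁ ⟨1, by omega⟩ = ⟨n - 1, by omega⟩)
    (hυ₁d : υ₁ ⟨n - 1, by omega⟩ = ⟨1, by omega⟩)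
    (hυ₁e : ∀ i : Fin (n + 1), 2 ≤ (i : ℕ) → (i : ℕ) ≤ n - 2 → υ₁ i = i)
    (hυ₂a : υ₂ 0 = ⟨1, by omega⟩) (hυ₂b : υ₂ ⟨1, by omega⟩ = 0)
    (hυ₂c : ∀ j : ℕ, ∀ _h1 : 1 ≤ j, ∀ _h2 : 2 * j + 1 ≤ n - 3,
      υ₂ ⟨2 * j, by omega⟩ = ⟨2 * j + 1, by omega⟩ ∧
      υ₂ ⟨2 * j + 1, by omega⟩ = ⟨2 * j, by omega⟩)
    (hυ₂d : υ₂ ⟨n - 2, by omega⟩ = ⟨n - 2, by omega⟩)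
    (hυ₂e : υ₂ ⟨n - 1, by omega⟩ = Fin.last n)
    (hυ₂f : υ₂ (Fin.last n) = ⟨n - 1, by omega⟩) :
    let ν : Fin (n + 1) → ℕ := fun i =>
      if (i : ℕ) = 0 ∨ (i : ℕ) = 1 ∨ (i : ℕ) = n - 1 ∨ (i : ℕ) = n then 1 else 2
    let X : Finset (Fin (n + 1) → ℕ) :=
      (Fintype.piFinset fun _ => Finset.range (ℓ + 1)).filter
        (fun m => ∑ i, ν i * m i = ℓ)
    let σ₁ : Equiv.Perm (Fin (n + 1) → ℕ) := (Equiv.arrowCongr υ₁ (Equiv.refl ℕ)).symm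
    let σ₂ : Equiv.Perm (Fin (n + 1) → ℕ) := (Equiv.arrowCongr υ₂ (Equiv.refl ℕ)).symm
    ((X.filter (fun m => ((σ₁ ^ k₁) * (σ₂ ^ k₂)) m = m)).card : ℚ)
      = ∑ m ∈ X, (-1 : ℚ) ^
          (k₁ * ((m ⟨n - 1, by omega⟩ + m (Fin.last n) : ℕ) : ℤ)
            + k₂ * ((∑ i ∈ Finset.univ.filter
                (fun i : Fin (n + 1) => (i : ℕ) % 2 = 1), m i : ℕ) : ℤ)) := by
  intro ν X σ₁ σ₂
  obtain ⟨p, rfl⟩ : ∃ p, n = 2 * p := heven.exists_two_nsmul _ |>.imp fun _ h => by simpa using h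
  have hX : ∀ m, m ∈ X ↔ ∑ i, ν i * m i = ℓ := by
    intro m
    simp only [X, Finset.mem_filter, Fintype.mem_piFinset, Finset.mem_range, and_iff_right_iff_imp]
    intro h i
    have h1 : ν i * m i ≤ ∑ i, ν i * m i :=
      Finset.single_le_sum (f := fun i => ν i * m i) (fun _ _ => Nat.zero_le _) (Finset.mem_univ i)
    have h2 : 1 ≤ ν i := by simp only [ν]; split_ifs <;> omega
    have h3 := Nat.mul_le_mul_right (m i) h2
    omega
  -- Closed forms for the values of `υ₁` and `υ₂` reduce every check on indices to arithmetic.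
  have v1 : ∀ i : Fin (2 * p + 1), (υ₁ i : ℕ) = if (i : ℕ) = 0 then 2 * p else
      if (i : ℕ) = 1 then 2 * p - 1 else if (i : ℕ) = 2 * p - 1 then 1 else
      if (i : ℕ) = 2 * p then 0 else (i : ℕ) := by
    intro i
    have hlt := i.isLt
    split_ifs with a b c d
    · rw [show i = 0 from Fin.ext a, hυ₁a]; rfl
    · rw [show i = ⟨1, by omega⟩ from Fin.ext b, hυ₁c]
    · rw [show i = ⟨2 * p - 1, by omega⟩ from Fin.ext c, hυ₁d]
    · rw [show i = Fin.last _ from Fin.ext d, hυ₁b]; rfl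
    · rw [hυ₁e i (by omega) (by omega)]
  have v2 : ∀ i : Fin (2 * p + 1), (υ₂ i : ℕ) = if (i : ℕ) = 2 * p - 2 then 2 * p - 2 else
      if (i : ℕ) = 2 * p - 1 then 2 * p else if (i : ℕ) = 2 * p then 2 * p - 1 else
      if (i : ℕ) % 2 = 0 then (i : ℕ) + 1 else (i : ℕ) - 1 := by
    intro i
    have hlt := i.isLt
    split_ifs with a b c d
    · rw [show i = ⟨2 * p - 2, by omega⟩ from Fin.ext a, hυ₂d]
    · rw [show i = ⟨2 * p - 1, by omega⟩ from Fin.ext b, hυ₂e]; rfl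
    · rw [show i = Fin.last _ from Fin.ext c, hυ₂f]
    · by_cases h0 : (i : ℕ) = 0
      · rw [show i = 0 from Fin.ext h0, hυ₂a]; rfl
      · have := (hυ₂c ((i : ℕ) / 2) (by omega) (by omega)).1
        have e : i = ⟨2 * ((i : ℕ) / 2), by omega⟩ := Fin.ext (by simp only; omega)
        rw [← e] at this
        rw [this]
        simp only; omega
    · by_cases h0 : (i : ℕ) = 1
      · rw [show i = ⟨1, by omega⟩ from Fin.ext h0, hυ₂b]; rfl
      · have := (hυ₂c ((i : ℕ) / 2) (by omega) (by omega)).2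
        have e : i = ⟨2 * ((i : ℕ) / 2) + 1, by omega⟩ := Fin.ext (by simp only; omega)
        rw [← e] at this
        rw [this]
        simp only; omega
  have hinv1 : ∀ i, υ₁ (υ₁ i) = i := by
    intro i
    have hlt := i.isLt
    have a := v1 i
    have b := v1 (υ₁ i)
    apply Fin.ext
    split_ifs at a b <;> omega
  have hinv2 : ∀ i, υ₂ (υ₂ i) = i := by
    intro i
    have hlt := i.isLt
    have a := v2 i
    have b := v2 (υ₂ i)
    apply Fin.ext
    split_ifs at a b <;> omega
  have hcomm : ∀ i, υ₁ (υ₂ i) = υ₂ (υ₁ i) := by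
    intro i
    have hlt := i.isLt
    have a := v2 i
    have b := v1 (υ₂ i)
    have c := v1 i
    have d := v2 (υ₁ i)
    apply Fin.ext
    split_ifs at a c <;> split_ifs at b d <;> omega
  have hν1 : ∀ i, ν (υ₁ i) = ν i := by
    intro i
    have hlt := i.isLt
    have a := v1 i
    simp only [ν]
    split_ifs at a <;> split_ifs <;> omega
  have hν2 : ∀ i, ν (υ₂ i) = ν i := by
    intro i
    have hlt := i.isLt
    have a := v2 i
    simp only [ν]
    split_ifs at a <;> split_ifs <;> omega
  have hσ1 : ∀ m, σ₁ m = fun i => m (υ₁ i) := fun m => rfl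
  have hσ2 : ∀ m, σ₂ m = fun i => m (υ₂ i) := fun m => rfl
  have hs1 : σ₁ * σ₁ = 1 := Equiv.ext fun m => by
    simp [Equiv.Perm.mul_apply, hσ1, hinv1]
  have hs2 : σ₂ * σ₂ = 1 := Equiv.ext fun m => by
    simp [Equiv.Perm.mul_apply, hσ2, hinv2]
  have hpow : ∀ (σ : Equiv.Perm (Fin (2 * p + 1) → ℕ)), σ * σ = 1 → ∀ k : ℤ,
      (Even k → σ ^ k = 1) ∧ (Odd k → σ ^ k = σ) := by
    intro σ hσ k
    have h2 : σ ^ (2 : ℤ) = 1 := by rw [zpow_two, hσ]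
    refine ⟨?_, ?_⟩
    · rintro ⟨r, rfl⟩
      rw [← two_mul, zpow_mul, h2, one_zpow]
    · rintro ⟨r, rfl⟩
      rw [zpow_add, zpow_mul, h2, one_zpow, one_mul, zpow_one]
  have hsgn : ∀ a b : ℕ, (-1 : ℚ) ^ (k₁ * (a : ℤ) + k₂ * (b : ℤ))
      = ((-1 : ℚ) ^ k₁) ^ a * ((-1 : ℚ) ^ k₂) ^ b := by
    intro a b
    rw [zpow_add₀ (by norm_num), zpow_mul, zpow_mul, zpow_natCast, zpow_natCast]
  simp only [hsgn]
  rcases Int.even_or_odd k₁ with h1 | h1 <;> rcases Int.even_or_odd k₂ with h2 | h2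
  · rw [(hpow σ₁ hs1 k₁).1 h1, (hpow σ₂ hs2 k₂).1 h2, h1.neg_one_zpow, h2.neg_one_zpow]
    simp
  · rw [(hpow σ₁ hs1 k₁).1 h1, (hpow σ₂ hs2 k₂).2 h2, h1.neg_one_zpow, h2.neg_one_zpow]
    simp only [one_mul, one_pow, hσ2]
    refine card_fixed_eq_signed_sum ν υ₂ hinv2 hν2 _ ?_ ?_ ℓ X hX
    · intro i hi
      have hlt := i.isLt
      have a := v2 i
      rw [hi] at a
      simp only [Finset.mem_filter, Finset.mem_univ, true_and]
      split_ifs at a <;> omega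
    · intro i hi
      have hlt := i.isLt
      have a := v2 i
      have hi' : (υ₂ i : ℕ) ≠ i := fun h => hi (Fin.ext h)
      simp only [Finset.mem_filter, Finset.mem_univ, true_and]
      split_ifs at a <;> omega
  · rw [(hpow σ₁ hs1 k₁).2 h1, (hpow σ₂ hs2 k₂).1 h2, h1.neg_one_zpow, h2.neg_one_zpow]
    simp only [mul_one, one_pow, hσ1]
    have hne : (⟨2 * p - 1, by omega⟩ : Fin (2 * p + 1)) ≠ Fin.last _ := fun h => by
      have := congrArg Fin.val h
      simp only [Fin.val_last] at this
      omega
    simp only [← Finset.sum_pair hne]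
    refine card_fixed_eq_signed_sum ν υ₁ hinv1 hν1 _ ?_ ?_ ℓ X hX
    · intro i hi
      have hlt := i.isLt
      have a := v1 i
      rw [hi] at a
      simp only [Finset.mem_insert, Finset.mem_singleton, Fin.ext_iff, Fin.val_last]
      split_ifs at a <;> omega
    · intro i hi
      have hlt := i.isLt
      have a := v1 i
      have hi' : (υ₁ i : ℕ) ≠ i := fun h => hi (Fin.ext h)
      simp only [Finset.mem_insert, Finset.mem_singleton, Fin.ext_iff, Fin.val_last]
      split_ifs at a <;> omega
  · rw [(hpow σ₁ hs1 k₁).2 h1, (hpow σ₂ hs2 k₂).2 h2, h1.neg_one_zpow, h2.neg_one_zpow]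
    simp only [Equiv.Perm.mul_apply, hσ1, hσ2]
    set u : Fin (2 * p + 1) := ⟨2 * p - 1, by omega⟩ with hu
    set w : Fin (2 * p + 1) := ⟨1, by omega⟩ with hw
    have huv : (u : ℕ) = 2 * p - 1 := rfl
    have hwv : (w : ℕ) = 1 := rfl
    have vsw : ∀ i : Fin (2 * p + 1), (Equiv.swap w u i : ℕ) = if (i : ℕ) = 1 then 2 * p - 1 else
        if (i : ℕ) = 2 * p - 1 then 1 else (i : ℕ) := by
      intro i
      simp only [Equiv.swap_apply_def, Fin.ext_iff, huv, hwv]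
      split_ifs <;> simp [huv, hwv]
    have hνsw : ∀ i, ν (Equiv.swap w u i) = ν i := by
      intro i
      have hlt := i.isLt
      have a := vsw i
      simp only [ν]
      split_ifs at a <;> split_ifs <;> omega
    -- The transversal for the product: the odd indices with `1` replaced by `n`.
    set S : Finset (Fin (2 * p + 1)) :=
      Finset.univ.filter fun i => ((i : ℕ) % 2 = 1 ∧ (i : ℕ) ≠ 1) ∨ (i : ℕ) = 2 * p with hSdef
    have hmap : ∀ m : Fin (2 * p + 1) → ℕ,
        (-1 : ℚ) ^ (m u + m (Fin.last (2 * p))) *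
          (-1 : ℚ) ^ (∑ i ∈ Finset.univ.filter (fun i : Fin (2 * p + 1) => (i : ℕ) % 2 = 1), m i)
        = (-1 : ℚ) ^ (∑ i ∈ S.map (Equiv.swap w u).toEmbedding, m i) := by
      intro m
      set R : Finset (Fin (2 * p + 1)) :=
        Finset.univ.filter fun i => (i : ℕ) % 2 = 1 ∧ (i : ℕ) ≠ 2 * p - 1 with hR
      have hodd : Finset.univ.filter (fun i : Fin (2 * p + 1) => (i : ℕ) % 2 = 1)
          = insert u R := by
        ext i
        simp only [hR, Finset.mem_insert, Finset.mem_filter, Finset.mem_univ, true_and,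
          Fin.ext_iff, huv]
        omega
      have hSm : S.map (Equiv.swap w u).toEmbedding = insert (Fin.last _) R := by
        ext i
        have hlt := i.isLt
        have a := vsw i
        simp only [hR, hSdef, Finset.mem_insert, Finset.mem_map_equiv, Equiv.symm_swap,
          Finset.mem_filter, Finset.mem_univ, true_and, Fin.ext_iff, Fin.val_last]
        split_ifs at a <;> omega
      have hu' : u ∉ R := by simp [hR, huv]
      have hl' : Fin.last (2 * p) ∉ R := by simp [hR]
      rw [hodd, hSm, Finset.sum_insert hu', Finset.sum_insert hl', ← pow_add,
        show m u + m (Fin.last (2 * p)) + (m u + ∑ i ∈ R, m i)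
          = 2 * m u + (m (Fin.last (2 * p)) + ∑ i ∈ R, m i) by ring, pow_add, pow_mul]
      simp
    rw [Finset.sum_congr rfl fun m _ => hmap m, signed_sum_map ν _ hνsw S ℓ X hX]
    have v12 : ∀ i : Fin (2 * p + 1), (υ₂ (υ₁ i) : ℕ) = if (i : ℕ) = 0 then 2 * p - 1 else
        if (i : ℕ) = 1 then 2 * p else if (i : ℕ) = 2 * p - 1 then 0 else
        if (i : ℕ) = 2 * p then 1 else if (i : ℕ) = 2 * p - 2 then 2 * p - 2 else
        if (i : ℕ) % 2 = 0 then (i : ℕ) + 1 else (i : ℕ) - 1 := by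
      intro i
      have hlt := i.isLt
      have a := v1 i
      rw [v2]
      split_ifs at a <;> split_ifs <;> omega
    refine card_fixed_eq_signed_sum ν (υ₂ * υ₁) ?_ ?_ S ?_ ?_ ℓ X hX
    · intro i
      simp only [Equiv.Perm.mul_apply, hcomm, hinv1, hinv2]
    · intro i
      simp only [Equiv.Perm.mul_apply, hν1, hν2]
    · intro i hi
      rw [Equiv.Perm.mul_apply] at hi
      have hlt := i.isLt
      have a := v12 i
      rw [hi] at a
      simp only [hSdef, Finset.mem_filter, Finset.mem_univ, true_and]
      split_ifs at a <;> omega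
    · intro i hi
      rw [Equiv.Perm.mul_apply] at hi ⊢
      have hlt := i.isLt
      have a := v12 i
      have hi' : (υ₂ (υ₁ i) : ℕ) ≠ i := fun h => hi (Fin.ext h)
      simp only [hSdef, Finset.mem_filter, Finset.mem_univ, true_and]
      split_ifs at a <;> omega
end

section
/- Let n ≥ 1, ℓ ≥ 1 and 0 ≤ i ≤ n be integers. Then (n+1+ℓ)·N_A(n,ℓ,i) = ∑_{d | gcd(n+1, ℓ, i)} d · ∑_{d' | gcd((n+1)/d, ℓ/d)} μ(d') · C((n+1+ℓ)/(d·d'), ℓ/(d·d')), where μ is the Möbius function, C(·,·) is the binomial coefficient, and gcd(n+1,ℓ,i) denotes the greatest common divisor of n+1, ℓ and i (so for i = 0 it is gcd(n+1,ℓ)). -/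
/-!
Write `N = n + 1` and let `ζ` be a primitive `N`-th root of unity in `ℂ`. Detecting the congruence
`∑ r·m_r ≡ i (mod N)` by the characters `a ↦ ζ ^ (t * a)` gives
`N · NA = ∑_{t < N} ζ ^ (-t i) · ∑_{|m| = ℓ} (ζ ^ t) ^ (∑ r·m_r)`.
The inner sum is the coefficient of `X ^ ℓ` in `∏_{r < N} (1 - ζ ^ (t r) X)⁻¹`. If `e` is the order
of `ζ ^ t`, that is `e = N / gcd(N, t)`, this product is `(1 - X ^ e) ^ (-N / e)`, so the coefficient
is a single binomial coefficient when `e ∣ ℓ` and zero otherwise (`sum_pow_weight`). After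
multiplication by `N + ℓ` it becomes `N · C((N + ℓ) / e, ℓ / e)` (`add_mul_choose`).

It remains to evaluate `∑_{t < N} ζ ^ (-t i) H (N / gcd(N, t))` for an arbitrary function `H`
(`sum_character_gcd`); equivalently, to evaluate Ramanujan sums. Möbius inversion writes
`H (N / g)` as `∑_{c ∣ g} G c`; exchanging the sums leaves, for each `c ∣ N`, a full character sum
over the multiples of `c`, which is `N / c` or `0` according to whether `N / c` divides `i`.

To stay with natural exponents, `-i` is represented by `n * i` modulo `N`.
-/

open Finset

/-- `NA n ℓ i` is the number of `(n+1)`-tuples `m` of nonnegative integers with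
`m_0 + ⋯ + m_n = ℓ` and `∑ r·m_r ≡ i (mod n+1)`; this is the number of dominant maximal
weights of `V((ℓ-1)Λ_0 + Λ_i)` over `A_n^(1)`. -/
def NA (n ℓ i : ℕ) : ℕ :=
  ((Fintype.piFinset fun _ : Fin (n + 1) => Finset.range (ℓ + 1)).filter
    (fun m => ∑ r, m r = ℓ ∧
      (∑ r : Fin (n + 1), (r : ℕ) * m r) % (n + 1) = i % (n + 1))).card

open PowerSeries in
open scoped Classical in
theorem prod_one_sub_root (η : ℂ) (e : ℕ) (he : 0 < e) (h : IsPrimitiveRoot η e) :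
    ∏ k ∈ range e, (1 - (C (η ^ k) : ℂ⟦X⟧) * X) = 1 - X ^ e := by
  have hC : IsPrimitiveRoot (C η : ℂ⟦X⟧) e := h.map_of_injective PowerSeries.C_injective
  have h1 := hC.pow_sub_pow_eq_prod_sub_mul (1 : ℂ⟦X⟧) X he
  rw [one_pow] at h1
  rw [h1]
  have hset : Polynomial.nthRootsFinset e (1 : ℂ⟦X⟧)
      = (range e).image (fun k => (C η : ℂ⟦X⟧) ^ k) := by
    symm
    apply Finset.eq_of_subset_of_card_le
    · intro x hx
      obtain ⟨k, -, rfl⟩ := Finset.mem_image.1 hx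
      rw [Polynomial.mem_nthRootsFinset he, ← pow_mul, mul_comm, pow_mul, hC.pow_eq_one, one_pow]
    · rw [hC.card_nthRootsFinset, Finset.card_image_of_injOn hC.injOn_pow, card_range]
  rw [hset, Finset.prod_image hC.injOn_pow]
  simp

open PowerSeries in
theorem prod_one_sub_root_mul (η : ℂ) (e q : ℕ) (he : 0 < e) (h : IsPrimitiveRoot η e) :
    ∏ k ∈ range (e * q), (1 - (C (η ^ k) : ℂ⟦X⟧) * X) = (1 - X ^ e) ^ q := by
  induction q with
  | zero => simp
  | succ q ih =>
    rw [mul_add, mul_one, prod_range_add, ih, pow_succ, ← prod_one_sub_root η e he h]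
    congr 1
    refine prod_congr rfl fun k _ => ?_
    rw [pow_add, pow_mul, h.pow_eq_one, one_pow, one_mul]

open PowerSeries in
theorem mk_pow_mul_one_sub (a : ℂ) :
    (PowerSeries.mk fun k => a ^ k) * (1 - (C a : ℂ⟦X⟧) * X) = 1 := by
  rw [mul_comm, PowerSeries.ext_iff]
  intro n
  cases n with
  | zero => simp
  | succ n => simp [sub_mul, mul_assoc, pow_succ']

open PowerSeries in
/-- The complete homogeneous symmetric polynomial of degree `ℓ` at `e * q` consecutive powers of a
primitive `e`-th root of unity, read off from `∏ (1 - η ^ r X)⁻¹ = (1 - X ^ e) ^ (-q)`. -/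
theorem coeff_prod_geom (η : ℂ) (e q ℓ : ℕ) (he : 0 < e) (hq : 0 < q) (h : IsPrimitiveRoot η e) :
    coeff ℓ (∏ r ∈ range (e * q), (PowerSeries.mk fun k => (η ^ r) ^ k))
      = if e ∣ ℓ then (Nat.choose (q - 1 + ℓ / e) (q - 1) : ℂ) else 0 := by
  obtain ⟨d, rfl⟩ : ∃ d, q = d + 1 := ⟨q - 1, by omega⟩
  set A : ℂ⟦X⟧ := ∏ r ∈ range (e * (d + 1)), (PowerSeries.mk fun k => (η ^ r) ^ k) with hA
  set B : ℂ⟦X⟧ := expand e he.ne' ((PowerSeries.mk 1) ^ (d + 1)) with hB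
  have h1 : A * (1 - X ^ e) ^ (d + 1) = 1 := by
    rw [← prod_one_sub_root_mul η e (d + 1) he h, hA, ← prod_mul_distrib]
    exact prod_eq_one fun r _ => mk_pow_mul_one_sub _
  have h2 : B * (1 - X ^ e) ^ (d + 1) = 1 := by
    have : (1 - X ^ e : ℂ⟦X⟧) = expand e he.ne' (1 - X) := by simp
    rw [this, hB, ← map_pow, ← map_mul, ← mul_pow, mk_one_mul_one_sub_eq_one, one_pow, map_one]
  have hAB : A = B := by
    calc A = A * (B * (1 - X ^ e) ^ (d + 1)) := by rw [h2, mul_one]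
      _ = B * (A * (1 - X ^ e) ^ (d + 1)) := by ring
      _ = B := by rw [h1, mul_one]
  rw [hAB, hB, coeff_expand, mk_one_pow_eq_mk_choose_add]
  simp

/-- Here `η` has order `e` and `n + 1 = e * q`, so each `e`-th root of unity occurs `q` times among the
`η ^ r`; the sum over `m` is the complete homogeneous symmetric polynomial of degree `ℓ` in them. -/
theorem sum_pow_weight (η : ℂ) (e q ℓ n : ℕ) (he : 0 < e) (hq : 0 < q) (h : IsPrimitiveRoot η e)
    (hN : n + 1 = e * q) :
    ∑ m ∈ piAntidiag (univ : Finset (Fin (n + 1))) ℓ, η ^ (∑ r : Fin (n + 1), (r : ℕ) * m r)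
      = if e ∣ ℓ then (Nat.choose (q - 1 + ℓ / e) (q - 1) : ℂ) else 0 := by
  rw [← coeff_prod_geom η e q ℓ he hq h, ← hN,
    ← Fin.prod_univ_eq_prod_range (fun r => PowerSeries.mk fun k => (η ^ r) ^ k),
    PowerSeries.coeff_prod]
  symm
  refine Finset.sum_bij (fun f _ => (f : Fin (n + 1) → ℕ)) ?_ ?_ ?_ ?_
  · intro f hf
    simp only [mem_finsuppAntidiag] at hf
    simpa [mem_piAntidiag] using hf.1
  · intro f _ g _ hfg
    exact DFunLike.coe_injective hfg
  · intro m hm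
    refine ⟨Finsupp.equivFunOnFinite.symm m, ?_, by simp⟩
    simp only [mem_piAntidiag] at hm
    simpa [mem_finsuppAntidiag] using hm.1
  · intro f _
    rw [← prod_pow_eq_pow_sum]
    refine prod_congr rfl fun r _ => ?_
    rw [PowerSeries.coeff_mk, pow_mul]

theorem sum_pow_root (ζ : ℂ) (N a : ℕ) (h : IsPrimitiveRoot ζ N) :
    ∑ t ∈ range N, ζ ^ (t * a) = if N ∣ a then (N : ℂ) else 0 := by
  have hcomm : ∀ t, ζ ^ (t * a) = (ζ ^ a) ^ t := fun t => by rw [mul_comm, pow_mul]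
  simp only [hcomm]
  split_ifs with hd
  · simp [(h.pow_eq_one_iff_dvd a).2 hd]
  · have h1 : ζ ^ a ≠ 1 := fun h' => hd ((h.pow_eq_one_iff_dvd a).1 h')
    rw [geom_sum_eq h1, ← pow_mul, mul_comm a, pow_mul, h.pow_eq_one, one_pow, sub_self, zero_div]

/-- Evaluation of a character sum weighted by a function of the order `N / gcd(N, t)` of `t`, with
`N = n + 1` and `n * i` standing for `-i`. -/
theorem sum_character_gcd (ζ : ℂ) (n i : ℕ) (h : IsPrimitiveRoot ζ (n + 1)) (H : ℕ → ℂ) :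
    ∑ t ∈ range (n + 1), ζ ^ (t * (n * i)) * H ((n + 1) / Nat.gcd (n + 1) t)
      = ∑ d ∈ (Nat.gcd (n + 1) i).divisors, (d : ℂ) *
          ∑ x ∈ ((n + 1) / d).divisors, (ArithmeticFunction.moebius x : ℂ) * H (d * x) := by
  set N := n + 1 with hN
  have hN0 : 0 < N := by omega
  set G : ℕ → ℂ := fun c =>
    ∑ x ∈ c.divisorsAntidiagonal, (ArithmeticFunction.moebius x.1 : ℂ) * H (N / x.2) with hG
  have hinv : ∀ g > 0, ∑ c ∈ g.divisors, G c = H (N / g) :=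
    (ArithmeticFunction.sum_eq_iff_sum_mul_moebius_eq (f := G) (g := fun b => H (N / b))).2
      fun g _ => rfl
  have hGd : ∀ d, d ∣ N → G (N / d)
      = ∑ x ∈ (N / d).divisors, (ArithmeticFunction.moebius x : ℂ) * H (d * x) := by
    intro d hd
    simp only [hG]
    rw [Nat.sum_divisorsAntidiagonal
      (fun x y => (ArithmeticFunction.moebius x : ℂ) * H (N / y))]
    refine sum_congr rfl fun x hx => ?_
    obtain ⟨k, hk⟩ := hd
    have hd0 : 0 < d := Nat.pos_of_ne_zero (by rintro rfl; omega)
    rw [hk, Nat.mul_div_cancel_left _ hd0] at hx ⊢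
    obtain ⟨y, rfl⟩ := Nat.dvd_of_mem_divisors hx
    have hy0 : 0 < y := Nat.pos_of_ne_zero (by rintro rfl; simp at hx)
    have hx0 : 0 < x := Nat.pos_of_mem_divisors hx
    rw [Nat.mul_div_cancel_left _ hx0, ← mul_assoc, Nat.mul_div_cancel _ hy0]
  -- The sum over the multiples `t = c * s` of `c`, for `N = c * d`.
  have hmult : ∀ c d, N = c * d →
      ∑ t ∈ range N with c ∣ t, ζ ^ (t * (n * i)) = if d ∣ i then (d : ℂ) else 0 := by
    intro c d hcd
    have hc0 : 0 < c := Nat.pos_of_ne_zero (by rintro rfl; omega)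
    have himg : (range N).filter (fun t => c ∣ t) = (range d).image (fun s => c * s) := by
      ext t
      simp only [mem_filter, mem_range, mem_image]
      constructor
      · rintro ⟨h1, s, rfl⟩
        exact ⟨s, by rw [hcd] at h1; exact Nat.lt_of_mul_lt_mul_left h1, rfl⟩
      · rintro ⟨s, hs, rfl⟩
        exact ⟨by rw [hcd]; exact Nat.mul_lt_mul_of_pos_left hs hc0, dvd_mul_right _ _⟩
    rw [himg, sum_image (fun a _ b _ hab => Nat.eq_of_mul_eq_mul_left hc0 hab)]
    have hprim : IsPrimitiveRoot (ζ ^ c) d := h.pow hN0 hcd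
    have := sum_pow_root (ζ ^ c) d (n * i) hprim
    have hcop : Nat.Coprime d n :=
      Nat.Coprime.coprime_dvd_left ⟨c, by rw [← hN, hcd, mul_comm]⟩
        (show Nat.Coprime (n + 1) n by simp)
    simp only [hcop.dvd_mul_left] at this
    rw [← this]
    refine sum_congr rfl fun s _ => ?_
    rw [← pow_mul, mul_assoc]
  calc ∑ t ∈ range N, ζ ^ (t * (n * i)) * H (N / Nat.gcd N t)
      = ∑ t ∈ range N, ∑ c ∈ N.divisors, if c ∣ t then ζ ^ (t * (n * i)) * G c else 0 := by
        refine sum_congr rfl fun t _ => ?_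
        have hg : 0 < Nat.gcd N t := Nat.gcd_pos_of_pos_left _ hN0
        rw [← hinv _ hg, mul_sum, ← sum_filter]
        refine sum_congr ?_ fun _ _ => rfl
        ext c
        simp only [Nat.mem_divisors, mem_filter, Nat.dvd_gcd_iff]
        constructor
        · rintro ⟨⟨h1, h2⟩, -⟩
          exact ⟨⟨h1, hN0.ne'⟩, h2⟩
        · rintro ⟨⟨h1, -⟩, h2⟩
          exact ⟨⟨h1, h2⟩, hg.ne'⟩
    _ = ∑ c ∈ N.divisors, G c * ∑ t ∈ range N with c ∣ t, ζ ^ (t * (n * i)) := by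
        rw [sum_comm]
        refine sum_congr rfl fun c _ => ?_
        rw [← sum_filter, mul_sum]
        exact sum_congr rfl fun _ _ => mul_comm _ _
    _ = ∑ d ∈ N.divisors, G (N / d) * if d ∣ i then (d : ℂ) else 0 := by
        rw [← Nat.sum_div_divisors N]
        refine sum_congr rfl fun d hd => ?_
        rw [hmult (N / d) d (Nat.div_mul_cancel (Nat.dvd_of_mem_divisors hd)).symm]
    _ = ∑ d ∈ N.divisors with d ∣ i, (d : ℂ) * G (N / d) := by
        rw [sum_filter]
        refine sum_congr rfl fun d _ => ?_
        split_ifs <;> simp [mul_comm]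
    _ = _ := by
        have hset : (N.divisors.filter fun d => d ∣ i) = (Nat.gcd N i).divisors := by
          ext d
          simp only [Nat.mem_divisors, mem_filter, Nat.dvd_gcd_iff]
          constructor
          · rintro ⟨⟨h1, -⟩, h2⟩
            exact ⟨⟨h1, h2⟩, (Nat.gcd_pos_of_pos_left _ hN0).ne'⟩
          · rintro ⟨⟨h1, h2⟩, -⟩
            exact ⟨⟨h1, hN0.ne'⟩, h2⟩
        rw [hset]
        refine sum_congr rfl fun d hd => ?_
        rw [hGd d ((Nat.dvd_of_mem_divisors hd).trans (Nat.gcd_dvd_left _ _))]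

/-- Character-sum expression for `NA`: the residue class of `i` is detected by all powers of `ζ`. -/
theorem card_NA (ζ : ℂ) (n ℓ i : ℕ) (h : IsPrimitiveRoot ζ (n + 1)) :
    ((n + 1 : ℕ) : ℂ) * NA n ℓ i
      = ∑ t ∈ range (n + 1), ζ ^ (t * (n * i)) *
          ∑ m ∈ piAntidiag (univ : Finset (Fin (n + 1))) ℓ,
            (ζ ^ t) ^ (∑ r : Fin (n + 1), (r : ℕ) * m r) := by
  have hNA : NA n ℓ i = ((piAntidiag (univ : Finset (Fin (n + 1))) ℓ).filter
      fun m => (n + 1) ∣ (∑ r : Fin (n + 1), (r : ℕ) * m r) + n * i).card := by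
    unfold NA
    congr 1
    ext m
    have hmod : (∑ r : Fin (n + 1), (r : ℕ) * m r) % (n + 1) = i % (n + 1) ↔
        (n + 1) ∣ (∑ r : Fin (n + 1), (r : ℕ) * m r) + n * i := by
      generalize (∑ r : Fin (n + 1), (r : ℕ) * m r) = S
      change S ≡ i [MOD (n + 1)] ↔ _
      rw [← Nat.modEq_zero_iff_dvd]
      -- `n * i` represents `-i`.
      have hz : i + n * i ≡ 0 [MOD (n + 1)] :=
        (Nat.modEq_zero_iff_dvd).2 ⟨i, by ring⟩
      constructor
      · intro hS
        exact (hS.add_right _).trans hz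
      · intro hS
        exact Nat.ModEq.add_right_cancel' _ (hS.trans hz.symm)
    simp only [mem_filter, Fintype.mem_piFinset, mem_range, mem_piAntidiag, hmod]
    constructor
    · rintro ⟨-, h1, h2⟩
      exact ⟨⟨h1, fun _ _ => mem_univ _⟩, h2⟩
    · rintro ⟨⟨h1, -⟩, h2⟩
      refine ⟨fun r => ?_, h1, h2⟩
      have := single_le_sum (f := m) (fun _ _ => Nat.zero_le _) (mem_univ r)
      exact Nat.lt_succ_of_le (this.trans h1.le)
  simp only [mul_sum]
  rw [sum_comm, hNA, card_filter, Nat.cast_sum, mul_sum]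
  refine sum_congr rfl fun m _ => ?_
  have := sum_pow_root ζ (n + 1) ((∑ r : Fin (n + 1), (r : ℕ) * m r) + n * i) h
  simp only [show ∀ t, ζ ^ (t * (n * i)) * (ζ ^ t) ^ (∑ r : Fin (n + 1), (r : ℕ) * m r)
    = ζ ^ (t * ((∑ r : Fin (n + 1), (r : ℕ) * m r) + n * i)) from
      fun t => by rw [← pow_mul, ← pow_add]; congr 1; ring]
  rw [this]
  split_ifs <;> simp

theorem add_mul_choose (q k : ℕ) (hq : 0 < q) :
    (q + k) * Nat.choose (q - 1 + k) (q - 1) = q * Nat.choose (q + k) k := by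
  obtain ⟨d, rfl⟩ : ∃ d, q = d + 1 := ⟨q - 1, by omega⟩
  have h1 := Nat.add_one_mul_choose_eq (d + k) d
  have h2 : Nat.choose (d + 1 + k) k = Nat.choose (d + k + 1) (d + 1) := by
    rw [← Nat.choose_symm_add (a := d + 1)]
    congr 1
    ring
  rw [h2, show d + 1 - 1 = d by omega, show d + 1 + k = d + k + 1 by ring, h1, mul_comm]

/-- **Closed formula for the number of dominant maximal weights in type `A_n^(1)`.**
For `n ≥ 1`, `ℓ ≥ 1` and `0 ≤ i ≤ n`,
`(n+1+ℓ)·NA(n,ℓ,i) = ∑_{d ∣ gcd(n+1,ℓ,i)} d ∑_{d' ∣ gcd((n+1)/d, ℓ/d)} μ(d')·C((n+1+ℓ)/(dd'), ℓ/(dd'))`. -/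
theorem stmt_9 (n ℓ i : ℕ) (hn : 1 ≤ n) (hℓ : 1 ≤ ℓ) (hi : i ≤ n) :
    ((n + 1 + ℓ) * NA n ℓ i : ℤ)
      = ∑ d ∈ (Nat.gcd (n + 1) (Nat.gcd ℓ i)).divisors,
          (d : ℤ) * ∑ d' ∈ (Nat.gcd ((n + 1) / d) (ℓ / d)).divisors,
            (ArithmeticFunction.moebius d') *
              (Nat.choose ((n + 1 + ℓ) / (d * d')) (ℓ / (d * d')) : ℤ) := by
  have hζ := Complex.isPrimitiveRoot_exp (n + 1) (by omega)
  set ζ := Complex.exp (2 * Real.pi * Complex.I / ((n + 1 : ℕ) : ℂ)) with hζdef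
  set H : ℕ → ℂ := fun e =>
    if e ∣ ℓ then (Nat.choose ((n + 1 + ℓ) / e) (ℓ / e) : ℂ) else 0 with hH
  have hN0 : ((n + 1 : ℕ) : ℂ) ≠ 0 := by exact_mod_cast Nat.succ_ne_zero n
  have hterm : ∀ t, ((n + 1 + ℓ : ℕ) : ℂ) * ∑ m ∈ piAntidiag (univ : Finset (Fin (n + 1))) ℓ,
      (ζ ^ t) ^ (∑ r : Fin (n + 1), (r : ℕ) * m r)
      = ((n + 1 : ℕ) : ℂ) * H ((n + 1) / Nat.gcd (n + 1) t) := by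
    intro t
    set g := Nat.gcd (n + 1) t with hg
    have hg0 : 0 < g := Nat.gcd_pos_of_pos_left _ (by omega)
    set e := (n + 1) / g with he
    have heg : n + 1 = e * g := (Nat.div_mul_cancel (Nat.gcd_dvd_left _ _)).symm
    have he0 : 0 < e := Nat.pos_of_ne_zero (by intro h0; simp [h0] at heg)
    have hprim : IsPrimitiveRoot (ζ ^ t) e := by
      have hfin : IsOfFinOrder ζ :=
        isOfFinOrder_iff_pow_eq_one.2 ⟨n + 1, by omega, hζ.pow_eq_one⟩
      have := hfin.orderOf_pow (n := t)
      rw [← hζ.eq_orderOf, ← hg, ← he] at this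
      rw [← this]
      exact IsPrimitiveRoot.orderOf _
    rw [sum_pow_weight (ζ ^ t) e g ℓ n he0 hg0 hprim heg, hH]
    dsimp only
    split_ifs with hd
    · obtain ⟨k, hk⟩ := hd
      have h1 := add_mul_choose g k hg0
      rw [hk, heg, ← mul_add, Nat.mul_div_cancel_left _ he0, Nat.mul_div_cancel_left _ he0]
      have h2 : e * (g + k) * Nat.choose (g - 1 + k) (g - 1) = e * g * Nat.choose (g + k) k := by
        rw [mul_assoc, h1, mul_assoc]
      exact_mod_cast h2
    · simp
  have hmain : ((n + 1 + ℓ : ℕ) : ℂ) * NA n ℓ i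
      = ∑ d ∈ (Nat.gcd (n + 1) i).divisors, (d : ℂ) *
          ∑ x ∈ ((n + 1) / d).divisors, (ArithmeticFunction.moebius x : ℂ) * H (d * x) := by
    rw [← sum_character_gcd ζ n i hζ H]
    apply mul_left_cancel₀ hN0
    rw [mul_left_comm, card_NA ζ n ℓ i hζ, mul_sum, mul_sum]
    refine sum_congr rfl fun t _ => ?_
    rw [mul_left_comm, hterm t, mul_left_comm]
  have hcast : (((n + 1 + ℓ) * NA n ℓ i : ℤ) : ℂ) = ((n + 1 + ℓ : ℕ) : ℂ) * NA n ℓ i := by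
    push_cast
    ring
  have hinj : Function.Injective (Int.cast : ℤ → ℂ) := Int.cast_injective
  apply hinj
  rw [hcast, hmain]
  push_cast
  symm
  -- The terms of the right-hand side of `hmain` with `d * x ∤ ℓ` vanish.
  have hsub : (Nat.gcd (n + 1) (Nat.gcd ℓ i)).divisors ⊆ (Nat.gcd (n + 1) i).divisors :=
    Nat.divisors_subset_of_dvd (Nat.gcd_pos_of_pos_left _ (by omega)).ne'
      (Nat.gcd_dvd_gcd_of_dvd_right _ (Nat.gcd_dvd_right _ _))
  refine (sum_congr rfl fun d hd => ?_).trans (sum_subset hsub fun d hd hd' => ?_)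
  · have hd0 : 0 < d := Nat.pos_of_mem_divisors hd
    have hdv := Nat.dvd_of_mem_divisors hd
    have hdN : d ∣ n + 1 := hdv.trans (Nat.gcd_dvd_left _ _)
    have hdl : d ∣ ℓ := (hdv.trans (Nat.gcd_dvd_right _ _)).trans (Nat.gcd_dvd_left _ _)
    have hNd : 0 < (n + 1) / d := Nat.div_pos (Nat.le_of_dvd (by omega) hdN) hd0
    congr 1
    refine (sum_congr rfl fun x hx => ?_).trans
      (sum_subset (Nat.divisors_subset_of_dvd hNd.ne' (Nat.gcd_dvd_left _ (ℓ / d)))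
        fun x hx hx' => ?_)
    · have hxl : d * x ∣ ℓ := (Nat.dvd_div_iff_mul_dvd hdl).1
        ((Nat.dvd_of_mem_divisors hx).trans (Nat.gcd_dvd_right _ _))
      simp only [hH, if_pos hxl]
    · have hxl : ¬ d * x ∣ ℓ := by
        intro hxl
        apply hx'
        rw [Nat.mem_divisors]
        exact ⟨Nat.dvd_gcd (Nat.dvd_of_mem_divisors hx) ((Nat.dvd_div_iff_mul_dvd hdl).2 hxl),
          (Nat.gcd_pos_of_pos_left _ hNd).ne'⟩
      simp only [hH, if_neg hxl, mul_zero]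
  · have hdl : ¬ d ∣ ℓ := by
      intro hdl
      apply hd'
      have hdv := Nat.dvd_of_mem_divisors hd
      rw [Nat.mem_divisors]
      exact ⟨Nat.dvd_gcd (hdv.trans (Nat.gcd_dvd_left _ _))
        (Nat.dvd_gcd hdl (hdv.trans (Nat.gcd_dvd_right _ _))),
        (Nat.gcd_pos_of_pos_left _ (by omega)).ne'⟩
    rw [sum_eq_zero, mul_zero]
    intro x _
    have hxl : ¬ d * x ∣ ℓ := fun hxl => hdl ((dvd_mul_right d x).trans hxl)
    simp only [hH, if_neg hxl, mul_zero]
end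

section
/- Let n ≥ 1 and ℓ ≥ 1 be integers. Then (n+1+ℓ)·N_A(n,ℓ,0) = ∑_{d | gcd(n+1, ℓ)} φ(d) · C((n+1+ℓ)/d, ℓ/d), where φ is Euler's totient function and C(·,·) is the binomial coefficient. (This is the Jayne–Misra formula for the number of dominant maximal weights of V(ℓΛ_0) over A_n^{(1)}.) -/
/-!
Write `N = n + 1`. The argument is a roots-of-unity filter applied to the generating function
`F_z = ∏_{r<N} ∑_k (z^r X)^k = ∏_{r<N} (1 - z^r X)⁻¹`, whose `ℓ`-th coefficient is
`∑_m z^(∑ r m_r)`, summed over the tuples `m` of total `ℓ`. Summing this coefficient over the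
`N`-th roots of unity `z` gives `N · NA n ℓ 0`.

On the other hand, if `z` has order `d ∣ N`, then `∏_{r<N} (1 - z^r X) = (1 - X^d)^(N/d)`, so the
coefficient is `C(N/d + ℓ/d - 1, ℓ/d)` when `d ∣ ℓ` and `0` otherwise (`coeff_genFun`). As there
are `φ(d)` primitive `d`-th roots of unity,
`N · NA n ℓ 0 = ∑_{d ∣ gcd(N, ℓ)} φ(d) C((N + ℓ)/d - 1, ℓ/d)`.
The stated form follows from `(a + b) C(a + b - 1, b) = a C(a + b, b)` with `a = N/d`, `b = ℓ/d`.
-/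

open Finset

open PowerSeries in
/-- The generating function `∏_{r<N} ∑_k (z^r X)^k`. -/
noncomputable def genFun (N : ℕ) (z : ℂ) : PowerSeries ℂ :=
  ∏ r : Fin N, PowerSeries.mk fun k => z ^ ((r : ℕ) * k)

open PowerSeries in
lemma mk_mul_one_sub (a : ℂ) (r : ℕ) :
    (PowerSeries.mk fun k => a ^ (r * k)) * (1 - PowerSeries.C a ^ r * X) = 1 := by
  ext k
  rw [← map_pow]
  cases k with
  | zero => simp
  | succ k =>
    simp only [mul_sub, mul_one, map_sub, coeff_mk, ← mul_assoc, coeff_succ_mul_X,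
      coeff_mul_C, coeff_one]
    rw [if_neg (by omega)]
    ring

open PowerSeries in
/-- For `z` of order `d`, the factors `1 - z^r X` are periodic in `r` and multiply to `1 - X^d`
over each period. -/
lemma prod_one_sub {z : ℂ} {d : ℕ} (hd : 0 < d) (hz : IsPrimitiveRoot z d) (q : ℕ) :
    ∏ r ∈ range (d * q), (1 - PowerSeries.C z ^ r * X) = (1 - (X : PowerSeries ℂ) ^ d) ^ q := by
  have hC : IsPrimitiveRoot (PowerSeries.C z) d :=
    hz.map_of_injective (f := PowerSeries.C) PowerSeries.C_injective
  induction q with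
  | zero => simp
  | succ q ih =>
    rw [Nat.mul_succ, prod_range_add, ih, pow_succ]
    congr 1
    -- The factorization of `T^d - α^d` over the domain `ℂ⟦X⟧` with `α = X`, evaluated at `T = 1`.
    have h := congrArg (Polynomial.eval 1)
      (X_pow_sub_C_eq_prod hC hd (rfl : (X : PowerSeries ℂ) ^ d = X ^ d))
    simp only [Polynomial.eval_sub, Polynomial.eval_pow, Polynomial.eval_X, one_pow,
      Polynomial.eval_C, Polynomial.eval_prod] at h
    rw [h]
    refine prod_congr rfl fun r _ => ?_
    rw [pow_add, pow_mul, hC.pow_eq_one, one_pow, one_mul]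

open PowerSeries in
/-- For `z` of order `d ∣ N`, `genFun N z = (1 - X^d)^(-N/d)`; this is its `l`-th coefficient. -/
lemma coeff_genFun {z : ℂ} {d N : ℕ} (hN : 0 < N) (hdN : d ∣ N)
    (hz : IsPrimitiveRoot z d) (l : ℕ) :
    coeff l (genFun N z) =
      if d ∣ l then (Nat.choose (N / d + l / d - 1) (l / d) : ℂ) else 0 := by
  have hd : 0 < d := Nat.pos_of_dvd_of_pos hdN hN
  obtain ⟨q, rfl⟩ := hdN
  have hq : 0 < q := Nat.pos_of_mul_pos_left hN
  obtain ⟨p, rfl⟩ : ∃ p, q = p + 1 := ⟨q - 1, by omega⟩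
  have h1 : genFun (d * (p + 1)) z * (1 - X ^ d) ^ (p + 1) = 1 := by
    rw [← prod_one_sub hd hz, genFun, ← Fin.prod_univ_eq_prod_range
      (fun r => (1 - PowerSeries.C z ^ r * X : PowerSeries ℂ)), ← prod_mul_distrib]
    exact prod_eq_one fun r _ => mk_mul_one_sub z r
  have h2 : (1 - X ^ d) ^ (p + 1) * expand d hd.ne' ((PowerSeries.mk 1 : PowerSeries ℂ) ^ (p + 1))
      = 1 := by
    have h := congrArg (fun f => expand d hd.ne' (f ^ (p + 1))) (mk_one_mul_one_sub_eq_one ℂ)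
    simpa [mul_pow, mul_comm] using h
  have h3 := left_inv_eq_right_inv h1 h2
  rw [h3, coeff_expand, mk_one_pow_eq_mk_choose_add, coeff_mk, Nat.mul_div_cancel_left _ hd]
  split_ifs with h
  · rw [Nat.add_right_comm, Nat.add_sub_cancel, Nat.choose_symm_add]
  · rfl

open PowerSeries in
lemma coeff_genFun_eq_sum (N l : ℕ) (z : ℂ) :
    coeff l (genFun N z) =
      ∑ m ∈ (Fintype.piFinset fun _ : Fin N => range (l + 1)).filter (fun m => ∑ r, m r = l),
        z ^ (∑ r : Fin N, (r : ℕ) * m r) := by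
  rw [genFun, coeff_prod]
  refine sum_bij' (fun f _ => ⇑f) (fun m _ => Finsupp.equivFunOnFinite.symm m) ?_ ?_ ?_ ?_ ?_
  · intro f hf
    have h : ∑ r, f r = l := by simpa using hf
    simp only [mem_filter, Fintype.mem_piFinset, mem_range, h, and_true]
    intro r
    have := single_le_sum (f := f) (fun i _ => Nat.zero_le _) (mem_univ r)
    omega
  · intro m hm
    simpa using (mem_filter.1 hm).2
  · intro f _
    simp
  · intro m _
    simp
  · intro f _
    simp [prod_pow_eq_pow_sum]

/-- Orthogonality: the power sums of the `N`-th roots of unity detect divisibility by `N`. -/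
lemma sum_nthRoots_pow {N : ℕ} (hN : 0 < N) (k : ℕ) :
    ∑ z ∈ Polynomial.nthRootsFinset N (1 : ℂ), z ^ k = if N ∣ k then (N : ℂ) else 0 := by
  have hw := Complex.isPrimitiveRoot_exp N hN.ne'
  set w := Complex.exp (2 * Real.pi * Complex.I / N)
  have hw0 : w ≠ 0 := hw.ne_zero hN.ne'
  split_ifs with h
  · obtain ⟨c, rfl⟩ := h
    rw [sum_congr rfl (g := fun _ => (1 : ℂ)), sum_const, hw.card_nthRootsFinset]
    · simp
    · intro z hz
      rw [pow_mul, (Polynomial.mem_nthRootsFinset hN _).1 hz, one_pow]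
  · -- Multiplication by `w` permutes the roots of unity, so the sum is fixed by `w ^ k ≠ 1`.
    have hS : ∑ z ∈ Polynomial.nthRootsFinset N (1 : ℂ), z ^ k
        = w ^ k * ∑ z ∈ Polynomial.nthRootsFinset N (1 : ℂ), z ^ k := by
      rw [mul_sum]
      symm
      refine sum_equiv (Equiv.mulLeft₀ w hw0) ?_ ?_
      · intro z
        simp [Polynomial.mem_nthRootsFinset hN, mul_pow, hw.pow_eq_one]
      · intro z _
        simp [mul_pow]
    have hk : w ^ k ≠ 1 := fun e => h ((hw.pow_eq_one_iff_dvd k).1 e)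
    by_contra hne
    exact hk (mul_right_cancel₀ hne (by rw [one_mul]; exact hS.symm))

lemma mul_NA_eq (n l : ℕ) :
    (n + 1) * NA n l 0 = ∑ d ∈ (Nat.gcd (n + 1) l).divisors,
      Nat.totient d * Nat.choose ((n + 1) / d + l / d - 1) (l / d) := by
  have hN : 0 < n + 1 := n.succ_pos
  -- Both sides are `∑_z [X^l] F_z` over the roots of unity `z` of order dividing `n + 1`.
  have hA : ∑ z ∈ Polynomial.nthRootsFinset (n + 1) (1 : ℂ),
      PowerSeries.coeff l (genFun (n + 1) z) = (((n + 1) * NA n l 0 : ℕ) : ℂ) := by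
    simp_rw [coeff_genFun_eq_sum]
    rw [sum_comm]
    simp_rw [sum_nthRoots_pow hN]
    rw [← sum_filter, sum_const, filter_filter, NA]
    simp only [Nat.dvd_iff_mod_eq_zero, Nat.zero_mod, nsmul_eq_mul]
    push_cast
    rw [mul_comm]
    -- The two filters differ only in their decidability instances.
    congr!
  have hB : ∑ z ∈ Polynomial.nthRootsFinset (n + 1) (1 : ℂ),
      PowerSeries.coeff l (genFun (n + 1) z) =
      ((∑ d ∈ (Nat.gcd (n + 1) l).divisors,
        Nat.totient d * Nat.choose ((n + 1) / d + l / d - 1) (l / d) : ℕ) : ℂ) := by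
    classical
    rw [IsPrimitiveRoot.nthRoots_one_eq_biUnion_primitiveRoots, sum_biUnion]
    · have hdiv : (Nat.gcd (n + 1) l).divisors = (n + 1).divisors.filter (· ∣ l) := by
        ext d
        simp [Nat.dvd_gcd_iff]
      rw [hdiv, sum_filter, Nat.cast_sum]
      refine sum_congr rfl fun d hd => ?_
      have hdN := Nat.dvd_of_mem_divisors hd
      have hd0 := Nat.pos_of_mem_divisors hd
      rw [sum_congr rfl fun z hz => coeff_genFun hN hdN ((mem_primitiveRoots hd0).1 hz) l,
        sum_const, Complex.card_primitiveRoots]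
      split_ifs <;> simp
    · intro a _ b _ hab
      exact IsPrimitiveRoot.disjoint hab
  exact_mod_cast hA.symm.trans hB

lemma add_mul_choose_pred {a : ℕ} (ha : 0 < a) (b : ℕ) :
    (a + b) * Nat.choose (a + b - 1) b = a * Nat.choose (a + b) b := by
  obtain ⟨c, rfl⟩ : ∃ c, a = c + 1 := ⟨a - 1, by omega⟩
  have h := Nat.add_one_mul_choose_eq (c + b) c
  rw [show c + 1 + b - 1 = c + b by omega, show c + 1 + b = c + b + 1 by omega]
  rw [← Nat.choose_symm_add, h, mul_comm, show c + b + 1 = (c + 1) + b by omega,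
    Nat.choose_symm_add]

/-- **Jayne–Misra formula.** For `n ≥ 1` and `ℓ ≥ 1`,
`(n+1+ℓ)·NA(n,ℓ,0) = ∑_{d ∣ gcd(n+1,ℓ)} φ(d)·C((n+1+ℓ)/d, ℓ/d)`. -/
theorem stmt_10 (n ℓ : ℕ) (hn : 1 ≤ n) (hℓ : 1 ≤ ℓ) :
    (n + 1 + ℓ) * NA n ℓ 0
      = ∑ d ∈ (Nat.gcd (n + 1) ℓ).divisors,
          Nat.totient d * Nat.choose ((n + 1 + ℓ) / d) (ℓ / d) := by
  apply Nat.eq_of_mul_eq_mul_left n.succ_pos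
  rw [Nat.succ_eq_add_one, mul_left_comm, mul_NA_eq, mul_sum, mul_sum]
  refine sum_congr rfl fun d hd => ?_
  have hd0 := Nat.pos_of_mem_divisors hd
  obtain ⟨hdN, hdl⟩ := Nat.dvd_gcd_iff.1 (Nat.dvd_of_mem_divisors hd)
  obtain ⟨a, ha⟩ := hdN
  obtain ⟨b, rfl⟩ := hdl
  have ha0 : 0 < a := Nat.pos_of_ne_zero (by rintro rfl; simp at ha)
  rw [ha, ← mul_add, Nat.mul_div_cancel_left _ hd0, Nat.mul_div_cancel_left _ hd0,
    Nat.mul_div_cancel_left _ hd0]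
  linear_combination d * d.totient * add_mul_choose_pred ha0 b
end

section
/- Let n ≥ 1 and ℓ ≥ 1 be integers and let 0 ≤ i, j ≤ n. Then N_A(n,ℓ,i) = N_A(n,ℓ,j) if and only if gcd(n+1, ℓ, i) = gcd(n+1, ℓ, j), where gcd(n+1,ℓ,i) denotes the greatest common divisor of the three integers n+1, ℓ, i (with gcd(n+1,ℓ,0) = gcd(n+1,ℓ)). -/
/-!
Write `N = n + 1` and `g = gcd(N, ℓ)`. The number `NA n ℓ i` counts the multisets of size `ℓ` in
`ℤ/N` with sum `i`. The sum over all multisets of size `ℓ` of a character of order `d`, evaluated at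
the sum of the multiset, is the coefficient of `X ^ ℓ` in `(1 - X ^ d) ^ (-N / d)`
(`sum_pow_eq_multichoose`). It vanishes unless `d ∣ g`, and for `d = g / m` it is
`β m = multichoose (P m) (Q m)`, where `P = N / g` and `Q = ℓ / g`. If `η` is the Möbius inverse
of `β`, so that `∑_{k ∣ m} η k = β m`, then Fourier inversion gives (`NA_formula`)

  `N * NA n ℓ i = ∑_{e ∣ gcd(g, i)} e * η (g / e)`,

so `NA n ℓ i` depends only on `gcd(g, i) = gcd(N, ℓ, i)`.

Conversely, `β (m + 1) ≥ 3 * β m` (`three_mul_multichoose_le`), and this growth makes each weight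
`e * η (g / e)` at least the sum of the weights of all larger divisors of `g` (`moebius_bounds`).
If two distinct divisors `a, b` of `g` had the same weight sum, the smallest `e` dividing exactly one
of them would outweigh all the other differences (`sum_divisors_injective`), so `gcd(g, i)` can
be recovered from `NA n ℓ i`.
-/

open Finset

/-! ### Growth of multichoose coefficients and of their Möbius inverse -/

theorem multichoose_succ_succ_mul (p q : ℕ) (hp : 1 ≤ p) :
    (q + 1) * p * (p + 1).multichoose (q + 1) = (p + q + 1) * (p + q) * p.multichoose q := by
  obtain ⟨p, rfl⟩ := Nat.exists_eq_add_of_le' hp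
  simp only [Nat.multichoose_eq]
  have e1 : p + 1 + 1 + (q + 1) - 1 = p + q + 1 + 1 := by omega
  have e2 : p + 1 + q - 1 = p + q := by omega
  rw [e1, e2]
  have h1 := Nat.add_one_mul_choose_eq (p + q + 1) q
  have h2 := Nat.choose_mul_succ_eq (p + q) q
  have e3 : p + q + 1 - q = p + 1 := by omega
  rw [e3] at h2
  zify at h1 h2 ⊢
  linear_combination (-(p + 1 : ℤ)) * h1 - (p + q + 2 : ℤ) * h2

/-- By `multichoose_succ_succ_mul` this reduces to `3 (q + 1) p ≤ (p + q + 1) (p + q)`, a quadratic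
inequality that holds for all integers `p, q ≥ 1`, with equality at e.g. `p = q = 1`. -/
theorem three_mul_multichoose_le (p q : ℕ) (hp : 1 ≤ p) (hq : 1 ≤ q) :
    3 * p.multichoose q ≤ (p + 1).multichoose (q + 1) := by
  have h := multichoose_succ_succ_mul p q hp
  have key : 3 * ((q + 1) * p) ≤ (p + q + 1) * (p + q) := by
    obtain ⟨p, rfl⟩ := Nat.exists_eq_add_of_le' hp
    obtain ⟨q, rfl⟩ := Nat.exists_eq_add_of_le' hq
    zify
    have : (0 : ℤ) ≤ ((p : ℤ) - q) * (p - q) + p * q + q * 2 - p := by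
      rcases Nat.eq_zero_or_pos q with rfl | hq'
      · rcases Nat.eq_zero_or_pos p with rfl | hp'
        · simp
        · have : (1 : ℤ) ≤ p := by exact_mod_cast hp'
          push_cast; nlinarith
      · have : (1 : ℤ) ≤ q := by exact_mod_cast hq'
        nlinarith [mul_self_nonneg ((p : ℤ) - q)]
    nlinarith
  have hpos : 0 < (q + 1) * p := by positivity
  refine Nat.le_of_mul_le_mul_left ?_ hpos
  rw [h]
  calc (q + 1) * p * (3 * p.multichoose q) = 3 * ((q + 1) * p) * p.multichoose q := by ring
    _ ≤ _ := Nat.mul_le_mul_right _ key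

theorem multichoose_mono {p p' q q' : ℕ} (h0 : 1 ≤ p) (hp : p ≤ p') (hq : q ≤ q') :
    p.multichoose q ≤ p'.multichoose q' := by
  simp only [Nat.multichoose_eq]
  calc (p + q - 1).choose q ≤ (p' + q - 1).choose q := Nat.choose_le_choose _ (by omega)
    _ = (p' + q - 1).choose (p' - 1) := by
      rw [← Nat.choose_symm (by omega : q ≤ p' + q - 1)]; congr 1; omega
    _ ≤ (p' + q' - 1).choose (p' - 1) := Nat.choose_le_choose _ (by omega)
    _ = (p' + q' - 1).choose q' := by
      rw [← Nat.choose_symm (by omega : q' ≤ p' + q' - 1)]; congr 1; omega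

theorem sum_Ico_le_half (β : ℕ → ℝ) (h3 : ∀ m, 1 ≤ m → 3 * β m ≤ β (m + 1)) (h1 : 0 ≤ β 1)
    (m : ℕ) (hm : 1 ≤ m) : ∑ k ∈ Ico 1 m, β k ≤ β m / 2 := by
  induction m, hm using Nat.le_induction with
  | base => simp; linarith
  | succ m hm ih =>
    rw [Finset.sum_Ico_succ_top hm]
    linarith [h3 m hm]

theorem sum_Ico_div_le (β : ℕ → ℝ) (h3 : ∀ m, 1 ≤ m → 3 * β m ≤ β (m + 1))
    (h0 : ∀ m, 1 ≤ m → 0 ≤ β m)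
    (m : ℕ) (hm : 3 ≤ m) : ∑ k ∈ Ico 1 m, β k / k ≤ 5 / 6 * (β m / m) := by
  induction m, hm using Nat.le_induction with
  | base =>
    have a := h3 1 le_rfl
    have b := h3 2 (by norm_num)
    norm_num [Finset.sum_Ico_succ_top] at *
    linarith
  | succ m hm ih =>
    rw [Finset.sum_Ico_succ_top (by omega)]
    have hm' : (3 : ℝ) ≤ m := by exact_mod_cast hm
    have hb := h0 m (by omega)
    have h := h3 m (by omega)
    have : β m / m * (11 / 6) ≤ 5 / 6 * (β (m + 1) / ((m + 1 : ℕ) : ℝ)) := by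
      push_cast
      rw [div_mul_eq_mul_div, mul_div_assoc' (5 / 6 : ℝ),
        div_le_div_iff₀ (by positivity) (by positivity)]
      nlinarith [mul_nonneg hb (by linarith : (0 : ℝ) ≤ m - 3)]
    linarith

/-- If `β` at least triples at each step, its Möbius inverse `η` over divisors satisfies `0 ≤ η ≤ β`,
and `η m / m` dominates the sum of all the earlier terms `η k / k`, not only those with `k ∣ m`. -/
theorem moebius_bounds (β η : ℕ → ℝ) (h3 : ∀ m, 1 ≤ m → 3 * β m ≤ β (m + 1)) (h1 : 0 ≤ β 1)
    (hη : ∀ m, 1 ≤ m → ∑ k ∈ m.divisors, η k = β m) (m : ℕ) (hm : 1 ≤ m) :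
    0 ≤ η m ∧ η m ≤ β m ∧ ∑ k ∈ Ico 1 m, η k / k ≤ η m / m := by
  have h0 : ∀ m, 1 ≤ m → 0 ≤ β m := by
    intro m hm
    induction m, hm using Nat.le_induction with
    | base => exact h1
    | succ m hm ih => linarith [h3 m hm]
  have hsplit : ∀ m, 1 ≤ m → η m = β m - ∑ k ∈ m.properDivisors, η k := by
    intro m hm
    rw [← hη m hm, ← Nat.cons_self_properDivisors (by omega), sum_cons]
    ring
  have hsub : ∀ m, m.properDivisors ⊆ Ico 1 m := by
    intro m k hk
    rw [Nat.mem_properDivisors] at hk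
    exact mem_Ico.2 ⟨Nat.pos_of_dvd_of_pos hk.1 (by omega), hk.2⟩
  have hbd : ∀ m, 1 ≤ m → 0 ≤ η m ∧ η m ≤ β m := by
    intro m
    induction m using Nat.strong_induction_on with
    | _ m ih =>
      intro hm
      have hle : ∑ k ∈ m.properDivisors, η k ≤ ∑ k ∈ m.properDivisors, β k :=
        sum_le_sum fun k hk => by
          have := mem_Ico.1 (hsub m hk)
          exact (ih k this.2 this.1).2
      have hle2 : ∑ k ∈ m.properDivisors, β k ≤ ∑ k ∈ Ico 1 m, β k :=
        sum_le_sum_of_subset_of_nonneg (hsub m) fun k hk _ => h0 k (mem_Ico.1 hk).1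
      have hnn : 0 ≤ ∑ k ∈ m.properDivisors, η k := sum_nonneg fun k hk => by
          have := mem_Ico.1 (hsub m hk)
          exact (ih k this.2 this.1).1
      have := sum_Ico_le_half β h3 h1 m hm
      have := hsplit m hm
      have := h0 m hm
      constructor <;> linarith
  refine ⟨(hbd m hm).1, (hbd m hm).2, ?_⟩
  have hT : ∑ k ∈ Ico 1 m, η k / k ≤ ∑ k ∈ Ico 1 m, β k / k := sum_le_sum fun k hk => by
    have := (hbd k (mem_Ico.1 hk).1).2
    gcongr
  refine hT.trans ?_
  have hs := hsplit m hm
  -- For `m ≥ 3` the sum of `β k / k` costs at most `5/6` of `β m / m`, and passing from `β m` to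
  -- `η m` at most another `1/6`; for `m = 2` these shares are `2/3` and `1/3`.
  rcases (by omega : m = 1 ∨ m = 2 ∨ 3 ≤ m) with rfl | rfl | hm3
  · simpa using (hbd 1 le_rfl).1
  · have p2 : Nat.properDivisors 2 = {1} := by decide
    have a := h3 1 le_rfl
    have := (hbd 1 le_rfl).2
    rw [p2, sum_singleton] at hs
    rw [hs]
    norm_num at *
    linarith
  · have hd : ∑ k ∈ m.properDivisors, η k ≤ β m / 6 := by
      calc ∑ k ∈ m.properDivisors, η k ≤ ∑ k ∈ m.properDivisors, β k :=
            sum_le_sum fun k hk => (hbd k (mem_Ico.1 (hsub m hk)).1).2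
        _ ≤ ∑ k ∈ Ico 1 (m - 1), β k := by
            refine sum_le_sum_of_subset_of_nonneg ?_ fun k hk _ => h0 k (mem_Ico.1 hk).1
            -- A proper divisor of `m ≥ 3` is never `m - 1`.
            intro k hk
            have h1 := mem_Ico.1 (hsub m hk)
            refine mem_Ico.2 ⟨h1.1, ?_⟩
            by_contra hc
            have hk' : k = m - 1 := by omega
            have hdv := (Nat.mem_properDivisors.1 hk).1
            have : k ∣ 1 := by
              have : m = k + 1 := by omega
              rw [this] at hdv
              exact (Nat.dvd_add_right (dvd_refl k)).1 hdv
            have := Nat.le_of_dvd one_pos this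
            omega
        _ ≤ β (m - 1) / 2 := sum_Ico_le_half β h3 h1 _ (by omega)
        _ ≤ β m / 6 := by
            have := h3 (m - 1) (by omega)
            rw [Nat.sub_add_cancel hm] at this
            linarith
    have := sum_Ico_div_le β h3 h0 m hm3
    have hfin : 5 / 6 * (β m / m) ≤ η m / m := by
      rw [mul_div_assoc']
      gcongr
      linarith
    linarith

/-- If each weight `v e` is at least the total weight of the larger divisors of `g`, then a divisor
`a` of `g` is determined by the total weight of its divisors. The least `e` dividing exactly one of
`a, b`, say `a`, outweighs everything dividing only `b`. The inequality is strict because `g` itself,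
of positive weight, is larger than `e` (or equal to it) and cannot divide `b`, as `e ∤ b`. -/
theorem sum_divisors_injective (g : ℕ) (v : ℕ → ℝ) (hg : 1 ≤ g)
    (hv0 : ∀ e, e ∣ g → 0 ≤ v e) (hvg : 0 < v g)
    (hv : ∀ e, e ∣ g → ∑ e' ∈ g.divisors with e < e', v e' ≤ v e)
    (a b : ℕ) (ha : a ∣ g) (hb : b ∣ g)
    (h : ∑ e ∈ a.divisors, v e = ∑ e ∈ b.divisors, v e) : a = b := by
  by_contra hab
  have ha0 : a ≠ 0 := by rintro rfl; simp at ha; omega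
  have hb0 : b ≠ 0 := by rintro rfl; simp at hb; omega
  have hne : ∃ e, (e ∣ a ∧ ¬ e ∣ b) ∨ (e ∣ b ∧ ¬ e ∣ a) := by
    by_contra! hc
    exact hab (Nat.dvd_antisymm ((hc a).1 dvd_rfl) ((hc b).2 dvd_rfl))
  classical
  obtain ⟨hsp, hmin⟩ := (⟨Nat.find_spec hne, fun m => Nat.find_min hne (m := m)⟩ :
    (_ ∧ ∀ m, m < Nat.find hne → _))
  set e := Nat.find hne
  wlog hea : e ∣ a ∧ ¬ e ∣ b generalizing a b
  · have hs : ∀ x, ((x ∣ b ∧ ¬ x ∣ a) ∨ (x ∣ a ∧ ¬ x ∣ b)) ↔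
      ((x ∣ a ∧ ¬ x ∣ b) ∨ (x ∣ b ∧ ¬ x ∣ a)) := fun x => or_comm
    have hf : Nat.find (⟨e, (hs e).2 hsp⟩ :
        ∃ x, (x ∣ b ∧ ¬ x ∣ a) ∨ (x ∣ a ∧ ¬ x ∣ b)) = e := by
      exact Nat.find_congr' (by intro n; exact hs n)
    refine this b a hb ha h.symm (Ne.symm hab) hb0 ha0 ⟨e, (hs e).2 hsp⟩ ?_ ?_ ?_
    · rw [hf]; exact (hs e).2 hsp
    · rw [hf]; intro m hm; rw [hs]; exact hmin m hm
    · rw [hf]; exact hsp.resolve_left hea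
  have heg : e ∣ g := hea.1.trans ha
  have hlt : ∑ e' ∈ b.divisors \ a.divisors, v e' < v e := by
    have hsubset : b.divisors \ a.divisors ⊆ ({e' ∈ g.divisors | e < e'}).erase g := by
      intro x hx
      simp only [mem_sdiff, Nat.mem_divisors, ne_eq, hb0, ha0, not_false_eq_true, and_true] at hx
      simp only [mem_erase, mem_filter, Nat.mem_divisors]
      refine ⟨?_, ⟨hx.1.trans hb, by omega⟩, ?_⟩
      · rintro rfl
        exact hea.2 (hea.1.trans (ha.trans hx.1))
      · by_contra hle
        rcases Nat.lt_or_eq_of_le (not_lt.1 hle) with h' | h'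
        · exact hmin x h' (Or.inr hx)
        · rw [h'] at hx; exact hx.2 hea.1
    have hle := sum_le_sum_of_subset_of_nonneg (f := v) hsubset
      fun x hx _ => hv0 x (by simp at hx; exact hx.2.1.1)
    rcases eq_or_ne e g with he | he
    · have : ({e' ∈ g.divisors | e < e'}).erase g = ∅ := by
        rw [he]
        ext x
        simp only [mem_erase, mem_filter, Nat.mem_divisors, notMem_empty, iff_false]
        rintro ⟨_, ⟨hx, _⟩, hx2⟩
        have := Nat.le_of_dvd (by omega) hx
        omega
      rw [this, sum_empty] at hle
      rw [he]
      linarith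
    · have hgm : g ∈ ({e' ∈ g.divisors | e < e'}) := by
        simp only [mem_filter, Nat.mem_divisors]
        exact ⟨⟨dvd_rfl, by omega⟩, lt_of_le_of_ne (Nat.le_of_dvd (by omega) heg) he⟩
      have := add_sum_erase _ v hgm
      have := hv e heg
      linarith
  have hge : v e ≤ ∑ e' ∈ a.divisors \ b.divisors, v e' :=
    single_le_sum (f := v) (fun x hx => hv0 x (by
      simp at hx; exact hx.1.1.trans ha)) (by simp [hea, ha0])
  have e1 := sum_inter_add_sum_sdiff a.divisors b.divisors v
  have e2 := sum_inter_add_sum_sdiff b.divisors a.divisors v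
  rw [inter_comm] at e2
  linarith

/-! ### Character sums over multisets -/

open PowerSeries in
/-- The generating function of the multisets `x` of size `ℓ` in `{0, …, N - 1}`, each weighted by
`z` to the sum of its elements, is `∏ 1 / (1 - z ^ r X)`. -/
theorem coeff_prod_geom_s11 (N ℓ : ℕ) (z : ℂ) :
    coeff ℓ (∏ r : Fin N, (PowerSeries.mk fun k => (z ^ (r : ℕ)) ^ k)) =
      ∑ x ∈ (Fintype.piFinset fun _ : Fin N => Finset.range (ℓ + 1)).filter
        (fun x => ∑ r, x r = ℓ), z ^ (∑ r : Fin N, (r : ℕ) * x r) := by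
  rw [PowerSeries.coeff_prod]
  refine Finset.sum_bij' (fun l _ => ⇑l) (fun x _ => Finsupp.equivFunOnFinite.symm x) ?_ ?_ ?_ ?_ ?_
  · intro l hl
    rw [mem_finsuppAntidiag] at hl
    simp only [mem_filter, Fintype.mem_piFinset, mem_range]
    refine ⟨fun r => ?_, hl.1⟩
    have := single_le_sum (f := l) (fun i _ => Nat.zero_le _) (mem_univ r)
    have h1 : ∑ r, l r = ℓ := hl.1
    omega
  · intro x hx
    rw [mem_finsuppAntidiag]
    exact ⟨(mem_filter.1 hx).2, subset_univ _⟩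
  · intro l _; ext; simp
  · intro x _; ext; simp
  · intro l _
    simp only [coeff_mk]
    rw [← prod_pow_eq_pow_sum]
    simp only [pow_mul]

open PowerSeries in
theorem prod_one_sub_primitive (d : ℕ) (hd : 0 < d) (z : ℂ) (hz : IsPrimitiveRoot z d) :
    ∏ r ∈ range d, (1 - C (z ^ r) * X : ℂ⟦X⟧) = 1 - X ^ d := by
  have hZ : IsPrimitiveRoot (C z : ℂ⟦X⟧) d := hz.map_of_injective (f := C) PowerSeries.C_injective
  have h := hZ.pow_sub_pow_eq_prod_sub_mul (1 : ℂ⟦X⟧) X hd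
  rw [one_pow] at h
  rw [h]
  refine prod_nbij (fun r => (C z : ℂ⟦X⟧) ^ r) ?_ ?_ ?_ ?_
  · intro r _
    rw [Polynomial.mem_nthRootsFinset hd, ← pow_mul, mul_comm, pow_mul, hZ.pow_eq_one, one_pow]
  · intro r hr s hs hrs
    exact hZ.pow_inj (by simpa using hr) (by simpa using hs) hrs
  · intro w hw
    have hw' : w ^ d = 1 := by simpa [Polynomial.mem_nthRootsFinset hd] using hw
    have : NeZero d := ⟨hd.ne'⟩
    obtain ⟨i, hi, rfl⟩ := hZ.eq_pow_of_pow_eq_one hw'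
    exact ⟨i, by simpa using hi, rfl⟩
  · intro r _
    rw [map_pow]

open PowerSeries in
theorem prod_one_sub_primitive_mul (d q : ℕ) (hd : 0 < d) (z : ℂ) (hz : IsPrimitiveRoot z d) :
    ∏ r ∈ range (d * q), (1 - C (z ^ r) * X : ℂ⟦X⟧) = (1 - X ^ d) ^ q := by
  induction q with
  | zero => simp
  | succ q ih =>
    rw [mul_add, mul_one, prod_range_add, ih, pow_succ, ← prod_one_sub_primitive d hd z hz]
    congr 1
    refine prod_congr rfl fun r _ => ?_
    rw [pow_add, pow_mul, hz.pow_eq_one, one_pow, one_mul]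

open PowerSeries in
/-- The expansion of `(1 - X ^ d) ^ (-q)`; the coefficient recurrence in `q` is Pascal's rule. -/
theorem mk_multichoose_mul (d q : ℕ) (hd : 0 < d) :
    (PowerSeries.mk fun k => if d ∣ k then (q.multichoose (k / d) : ℂ) else 0) * (1 - X ^ d) ^ q
      = 1 := by
  induction q with
  | zero =>
    rw [pow_zero, mul_one]
    ext k
    rw [coeff_mk, coeff_one]
    rcases Nat.eq_zero_or_pos k with rfl | hk
    · simp
    · rw [if_neg hk.ne']
      split_ifs with h
      · obtain ⟨c, rfl⟩ := h
        obtain ⟨c, rfl⟩ : ∃ c', c = c' + 1 := ⟨c - 1, by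
          have : c ≠ 0 := by rintro rfl; simp at hk
          omega⟩
        simp [Nat.mul_div_cancel_left _ hd]
      · rfl
  | succ q ih =>
    refine Eq.trans ?_ ih
    rw [pow_succ', ← mul_assoc]
    congr 1
    ext k
    rw [mul_sub, mul_one, map_sub, coeff_mul_X_pow', coeff_mk, coeff_mk]
    by_cases h : d ∣ k
    · obtain ⟨c, rfl⟩ := h
      rcases c with _ | c
      · simp [hd.ne']
      · have e : d * (c + 1) - d = d * c := by rw [mul_add, mul_one, Nat.add_sub_cancel]
        rw [if_pos (dvd_mul_right _ _), if_pos (by nlinarith), coeff_mk, e,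
          if_pos (dvd_mul_right _ _), if_pos (dvd_mul_right _ _), Nat.mul_div_cancel_left _ hd,
          Nat.mul_div_cancel_left _ hd, Nat.multichoose_succ_succ]
        push_cast; ring
    · rw [if_neg h, coeff_mk, if_neg h]
      split_ifs with h' h''
      · rw [Nat.dvd_sub_iff_left h' dvd_rfl] at h''
        exact absurd h'' h
      · simp
      · simp

open PowerSeries in
/-- Evaluation of a character of order `d` of `ℤ/dq`, summed over the multisets of size `ℓ`: the
generating function is `∏ (1 - z ^ r X)⁻¹ = (1 - X ^ d) ^ (-q)`. -/
theorem sum_pow_eq_multichoose (d q ℓ : ℕ) (hd : 0 < d) (z : ℂ) (hz : IsPrimitiveRoot z d) :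
    ∑ x ∈ (Fintype.piFinset fun _ : Fin (d * q) => Finset.range (ℓ + 1)).filter
        (fun x => ∑ r, x r = ℓ), z ^ (∑ r : Fin (d * q), (r : ℕ) * x r) =
      if d ∣ ℓ then (q.multichoose (ℓ / d) : ℂ) else 0 := by
  rw [← coeff_prod_geom_s11]
  have h1 : (∏ r : Fin (d * q), (PowerSeries.mk fun k => (z ^ (r : ℕ)) ^ k)) *
      (1 - X ^ d) ^ q = (1 : ℂ⟦X⟧) := by
    rw [← prod_one_sub_primitive_mul d q hd z hz, ← Fin.prod_univ_eq_prod_range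
      (fun r => (1 - C (z ^ r) * X : ℂ⟦X⟧)), ← prod_mul_distrib]
    refine prod_eq_one fun r _ => ?_
    ext k
    rw [mul_sub, mul_one, ← mul_assoc, map_sub]
    rcases k with _ | k
    · simp
    · rw [coeff_succ_mul_X, coeff_mul_C, coeff_mk, coeff_mk, coeff_one, if_neg (by omega)]
      ring
  have h2 := mk_multichoose_mul d q hd
  have hne : (1 - X ^ d : ℂ⟦X⟧) ^ q ≠ 0 := by
    intro h; rw [h, mul_zero] at h2; exact zero_ne_one h2
  have := mul_right_cancel₀ hne (h1.trans h2.symm)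
  rw [this, coeff_mk]

/-- Orthogonality for the subgroup of order `e` of `ℤ/N`, namely the `k` with `e k = 0`. -/
theorem sum_root_pow (N e a : ℕ) (hN : 0 < N) (he : e ∣ N) (z : ℂ) (hz : IsPrimitiveRoot z N) :
    ∑ k ∈ range N with N ∣ e * k, z ^ (k * a) = if e ∣ a then (e : ℂ) else 0 := by
  obtain ⟨f, rfl⟩ := he
  have he0 : 0 < e := Nat.pos_of_mul_pos_right hN
  have hf0 : 0 < f := Nat.pos_of_mul_pos_left hN
  have h1 : (range (e * f)).filter (fun k => e * f ∣ e * k) = (range e).image (fun u => f * u) := by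
    ext k
    simp only [mem_filter, mem_range, mem_image]
    constructor
    · rintro ⟨hk, hd⟩
      obtain ⟨u, rfl⟩ := Nat.dvd_of_mul_dvd_mul_left he0 hd
      exact ⟨u, by nlinarith, rfl⟩
    · rintro ⟨u, hu, rfl⟩
      exact ⟨by nlinarith, by rw [← mul_assoc]; exact dvd_mul_right _ _⟩
  rw [h1, sum_image (fun u _ v _ h => Nat.eq_of_mul_eq_mul_left hf0 h)]
  have hw : IsPrimitiveRoot (z ^ f) e := hz.pow hN (mul_comm _ _)
  have h2 : ∀ u, z ^ (f * u * a) = ((z ^ f) ^ a) ^ u := by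
    intro u; rw [← pow_mul, ← pow_mul]; congr 1; ring
  simp only [h2]
  split_ifs with h
  · rw [(hw.pow_eq_one_iff_dvd a).2 h]; simp
  · have hne : (z ^ f) ^ a ≠ 1 := fun hc => h ((hw.pow_eq_one_iff_dvd a).1 hc)
    rw [geom_sum_eq hne, ← pow_mul, mul_comm a e, pow_mul, hw.pow_eq_one, one_pow]
    simp

/-! ### The counting formula and the comparison -/

/-- The character sum of `sum_pow_eq_multichoose` for the character `s ↦ ζ ^ (k s)` of order `d`,
rewritten by Möbius inversion as a sum over the divisors `e` of `gcd(N, ℓ)` with `d ∣ e`, i.e. with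
`N ∣ e * k`. The sum is empty, and both sides vanish, when `d ∤ ℓ`. -/
theorem sum_pow_eq_sum_divisors (N ℓ k : ℕ) (hN : 0 < N) (ζ : ℂ)
    (hζ : IsPrimitiveRoot ζ N) (η : ℕ → ℝ)
    (hη : ∀ m, 1 ≤ m → ∑ c ∈ m.divisors, η c =
      (N / N.gcd ℓ * m).multichoose (ℓ / N.gcd ℓ * m)) :
    ∑ x ∈ (Fintype.piFinset fun _ : Fin N => Finset.range (ℓ + 1)).filter
        (fun x => ∑ r, x r = ℓ), (ζ ^ k) ^ (∑ r : Fin N, (r : ℕ) * x r) =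
      ∑ e ∈ (N.gcd ℓ).divisors with N ∣ e * k, (η (N.gcd ℓ / e) : ℂ) := by
  set g := N.gcd ℓ with hg
  have hg0 : 0 < g := Nat.gcd_pos_of_pos_left _ hN
  have hgN : g ∣ N := Nat.gcd_dvd_left _ _
  have hgℓ : g ∣ ℓ := Nat.gcd_dvd_right _ _
  set d := orderOf (ζ ^ k) with hd
  have hz : IsPrimitiveRoot (ζ ^ k) d := IsPrimitiveRoot.orderOf _
  have hdN : d ∣ N := orderOf_dvd_of_pow_eq_one (by
    rw [← pow_mul, mul_comm, pow_mul, hζ.pow_eq_one, one_pow])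
  have hd0 : 0 < d := Nat.pos_of_dvd_of_pos hdN hN
  have hiff : ∀ e, N ∣ e * k ↔ d ∣ e := by
    intro e
    rw [← hζ.pow_eq_one_iff_dvd, ← hz.pow_eq_one_iff_dvd, ← pow_mul, mul_comm]
  simp only [hiff]
  have hS : ∑ x ∈ (Fintype.piFinset fun _ : Fin N => Finset.range (ℓ + 1)).filter
        (fun x => ∑ r, x r = ℓ), (ζ ^ k) ^ (∑ r : Fin N, (r : ℕ) * x r) =
      if d ∣ ℓ then ((N / d).multichoose (ℓ / d) : ℂ) else 0 := by
    have h := sum_pow_eq_multichoose d (N / d) ℓ hd0 _ hz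
    rwa [Nat.mul_div_cancel' hdN] at h
  rw [hS]
  split_ifs with hdℓ
  · obtain ⟨m, hm⟩ : d ∣ g := Nat.dvd_gcd hdN hdℓ
    have hm0 : 0 < m := Nat.pos_of_ne_zero (by rintro rfl; omega)
    have e1 : N / d = N / g * m := by
      obtain ⟨c, hc⟩ := hgN
      rw [hc, Nat.mul_div_cancel_left _ hg0, hm, mul_assoc, Nat.mul_div_cancel_left _ hd0, mul_comm]
    have e2 : ℓ / d = ℓ / g * m := by
      obtain ⟨c, hc⟩ := hgℓ
      rw [hc, Nat.mul_div_cancel_left _ hg0, hm, mul_assoc, Nat.mul_div_cancel_left _ hd0, mul_comm]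
    have h := hη m hm0
    rw [e1, e2]
    have h' : (((N / g * m).multichoose (ℓ / g * m) : ℝ) : ℂ) = ∑ c ∈ m.divisors, (η c : ℂ) := by
      rw [← h]; push_cast; rfl
    rw [Complex.ofReal_natCast] at h'
    rw [h']
    refine sum_bij' (fun c _ => g / c) (fun e _ => g / e) ?_ ?_ ?_ ?_ ?_
    · intro c hc
      obtain ⟨⟨u, rfl⟩, _⟩ := Nat.mem_divisors.1 hc
      have hc0 : 0 < c := Nat.pos_of_mul_pos_right hm0
      have : g / c = d * u := by
        rw [hm, mul_left_comm, Nat.mul_div_cancel_left _ hc0]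
      rw [this, mem_filter, Nat.mem_divisors]
      exact ⟨⟨⟨c, by rw [hm]; ring⟩, hg0.ne'⟩, dvd_mul_right _ _⟩
    · intro e he
      obtain ⟨he, u, rfl⟩ := mem_filter.1 he
      have he := Nat.dvd_of_mem_divisors he
      rw [hm, Nat.mul_div_mul_left _ _ hd0, Nat.mem_divisors]
      rw [hm] at he
      exact ⟨Nat.div_dvd_of_dvd (Nat.dvd_of_mul_dvd_mul_left hd0 he), hm0.ne'⟩
    · intro c hc
      have : c ∣ g := (Nat.dvd_of_mem_divisors hc).trans ⟨d, by rw [hm, mul_comm]⟩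
      exact Nat.div_div_self this hg0.ne'
    · intro e he
      exact Nat.div_div_self (Nat.dvd_of_mem_divisors (mem_filter.1 he).1) hg0.ne'
    · intro c hc
      have : c ∣ g := (Nat.dvd_of_mem_divisors hc).trans ⟨d, by rw [hm, mul_comm]⟩
      rw [Nat.div_div_self this hg0.ne']
  · rw [eq_comm]
    refine sum_eq_zero fun e he => ?_
    obtain ⟨he, hde⟩ := mem_filter.1 he
    exact absurd (hde.trans ((Nat.dvd_of_mem_divisors he).trans hgℓ)) hdℓ

/-- With `N = n + 1` and `g = gcd(N, ℓ)`: `N * NA n ℓ i` is the sum of `e * η (g / e)` over the common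
divisors `e` of `g` and `i`. This is Fourier inversion on `ℤ/N`. -/
theorem NA_formula (n ℓ i : ℕ) (hi : i ≤ n) (η : ℕ → ℝ)
    (hη : ∀ m, 1 ≤ m → ∑ c ∈ m.divisors, η c =
      ((n + 1) / (n + 1).gcd ℓ * m).multichoose (ℓ / (n + 1).gcd ℓ * m)) :
    ((n + 1 : ℕ) : ℝ) * NA n ℓ i =
      ∑ e ∈ (((n + 1).gcd ℓ).gcd i).divisors, (e : ℝ) * η ((n + 1).gcd ℓ / e) := by
  have hN : 0 < n + 1 := n.succ_pos
  have key : (((n + 1 : ℕ) : ℂ)) * NA n ℓ i =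
      ∑ e ∈ (((n + 1).gcd ℓ).gcd i).divisors, (e : ℂ) * (η ((n + 1).gcd ℓ / e) : ℂ) := by
    unfold NA
    generalize hNn : n + 1 = N at *
    have hiN : i < N := by omega
    set g := N.gcd ℓ with hg
    have hg0 : 0 < g := Nat.gcd_pos_of_pos_left _ hN
    have hgN : g ∣ N := Nat.gcd_dvd_left _ _
    obtain ⟨ζ, hζ⟩ : ∃ ζ : ℂ, IsPrimitiveRoot ζ N := ⟨_, Complex.isPrimitiveRoot_exp N hN.ne'⟩
    -- The residue `-i` is represented by the natural number `N - i`, which is not truncated.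
    have hdvd : ∀ e, e ∣ N → (e ∣ N - i ↔ e ∣ i) := by
      intro e he
      rw [← Nat.dvd_sub_iff_right hiN.le he]
    have hmod : ∀ s, (s % N = i % N) ↔ N ∣ s + (N - i) := by
      intro s
      change s ≡ i [MOD N] ↔ _
      rw [← Nat.modEq_zero_iff_dvd]
      constructor
      · intro h
        have := h.add_right (N - i)
        rw [Nat.add_sub_cancel' hiN.le] at this
        exact this.trans (by simp [Nat.ModEq])
      · intro h
        refine Nat.ModEq.add_right_cancel' (N - i) (h.trans ?_)
        rw [Nat.add_sub_cancel' hiN.le]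
        simp [Nat.ModEq]
    rw [← filter_filter, card_filter, Nat.cast_sum, mul_sum]
    simp only [hmod]
    calc _ = ∑ x ∈ (Fintype.piFinset fun _ : Fin N => Finset.range (ℓ + 1)).filter
          (fun x => ∑ r, x r = ℓ), ∑ k ∈ range N,
            ζ ^ (k * (∑ r : Fin N, (r : ℕ) * x r + (N - i))) := by
          refine sum_congr rfl fun x _ => ?_
          have h := sum_root_pow N N (∑ r : Fin N, (r : ℕ) * x r + (N - i)) hN dvd_rfl ζ hζ
          simp only [dvd_mul_right, filter_true] at h
          rw [h]
          split_ifs <;> simp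
      _ = ∑ k ∈ range N, ζ ^ (k * (N - i)) *
            ∑ e ∈ g.divisors with N ∣ e * k, (η (g / e) : ℂ) := by
          rw [sum_comm]
          refine sum_congr rfl fun k _ => ?_
          rw [← sum_pow_eq_sum_divisors N ℓ k hN ζ hζ η hη, mul_sum]
          refine sum_congr rfl fun x _ => ?_
          rw [mul_add, pow_add, pow_mul ζ k (∑ r, _), mul_comm]
      _ = ∑ e ∈ g.divisors, (η (g / e) : ℂ) * ∑ k ∈ range N with N ∣ e * k, ζ ^ (k * (N - i)) := by
          simp only [sum_filter, mul_sum]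
          rw [sum_comm]
          refine sum_congr rfl fun e _ => sum_congr rfl fun k _ => ?_
          split_ifs <;> ring
      _ = ∑ e ∈ g.divisors, if e ∣ i then (e : ℂ) * (η (g / e) : ℂ) else 0 := by
          refine sum_congr rfl fun e he => ?_
          have heN := (Nat.dvd_of_mem_divisors he).trans hgN
          rw [sum_root_pow N e (N - i) hN heN ζ hζ]
          simp only [hdvd e heN]
          split_ifs <;> ring
      _ = _ := by
          rw [← sum_filter]
          refine sum_congr ?_ fun _ _ => rfl
          ext e
          have h1 := hg0.ne'
          have h2 : g.gcd i ≠ 0 := (Nat.gcd_pos_of_pos_left _ hg0).ne'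
          simp only [mem_filter, Nat.mem_divisors, Nat.dvd_gcd_iff]
          tauto
  exact_mod_cast key

/-- For `n ≥ 1`, `ℓ ≥ 1` and `0 ≤ i, j ≤ n`: `NA(n,ℓ,i) = NA(n,ℓ,j)` iff
`gcd(n+1,ℓ,i) = gcd(n+1,ℓ,j)`. -/
theorem stmt_11 (n ℓ i j : ℕ) (hn : 1 ≤ n) (hℓ : 1 ≤ ℓ) (hi : i ≤ n) (hj : j ≤ n) :
    NA n ℓ i = NA n ℓ j ↔
      Nat.gcd (n + 1) (Nat.gcd ℓ i) = Nat.gcd (n + 1) (Nat.gcd ℓ j) := by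
  rw [← Nat.gcd_assoc, ← Nat.gcd_assoc]
  have hN : 0 < n + 1 := n.succ_pos
  set g := (n + 1).gcd ℓ with hg
  have hg0 : 0 < g := Nat.gcd_pos_of_pos_left _ hN
  set P := (n + 1) / g with hP
  set Q := ℓ / g with hQ
  have hP1 : 1 ≤ P := Nat.div_pos (Nat.le_of_dvd hN (Nat.gcd_dvd_left _ _)) hg0
  have hQ1 : 1 ≤ Q := Nat.div_pos (Nat.le_of_dvd hℓ (Nat.gcd_dvd_right _ _)) hg0
  set β : ℕ → ℝ := fun m => ((P * m).multichoose (Q * m) : ℝ) with hβ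
  have h3 : ∀ m, 1 ≤ m → 3 * β m ≤ β (m + 1) := by
    intro m hm
    have hPm : 1 ≤ P * m := Nat.mul_pos hP1 hm
    have hQm : 1 ≤ Q * m := Nat.mul_pos hQ1 hm
    have h := (three_mul_multichoose_le (P * m) (Q * m) hPm hQm).trans
      (multichoose_mono (p' := P * (m + 1)) (q' := Q * (m + 1)) (by omega)
        (by rw [mul_add]; omega) (by rw [mul_add]; omega))
    simp only [hβ]
    exact_mod_cast h
  have h1 : 0 < β 1 := by
    have h := multichoose_mono (p := 1) (p' := P * 1) (q := 0) (q' := Q * 1) le_rfl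
      (by omega) (by omega)
    rw [Nat.multichoose_zero_right] at h
    have h' : 0 < (P * 1).multichoose (Q * 1) := h
    simp only [hβ]
    exact_mod_cast h'
  obtain ⟨η, hη⟩ : ∃ η : ℕ → ℝ, ∀ m, 1 ≤ m → ∑ c ∈ m.divisors, η c = β m :=
    ⟨_, fun m hm => (ArithmeticFunction.sum_eq_iff_sum_mul_moebius_eq (g := β)).2
      (fun _ _ => rfl) m hm⟩
  have hbound := moebius_bounds β η h3 h1.le hη
  have hη1 : 0 < η 1 := by
    have := hη 1 le_rfl
    simp at this
    linarith
  have hfi := NA_formula n ℓ i hi η hη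
  have hfj := NA_formula n ℓ j hj η hη
  have hNr : ((n + 1 : ℕ) : ℝ) ≠ 0 := by exact_mod_cast hN.ne'
  have hquot : ∀ e, e ∣ g → 1 ≤ g / e := fun e he =>
    Nat.div_pos (Nat.le_of_dvd hg0 he) (Nat.pos_of_dvd_of_pos he hg0)
  constructor
  · intro h
    rw [h, hfj] at hfi
    refine (sum_divisors_injective g (fun e => (e : ℝ) * η (g / e)) hg0 ?_ ?_ ?_ _ _
      (Nat.gcd_dvd_left _ _) (Nat.gcd_dvd_left _ _) hfi).symm
    · intro e he
      exact mul_nonneg (Nat.cast_nonneg _) (hbound _ (hquot e he)).1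
    · rw [Nat.div_self hg0]
      have : (0 : ℝ) < g := by exact_mod_cast hg0
      positivity
    · intro e he
      have hw : ∀ e, e ∣ g → (e : ℝ) * η (g / e) = g * (η (g / e) / ((g / e : ℕ) : ℝ)) := by
        intro e he
        have he0 : (e : ℝ) ≠ 0 := by
          exact_mod_cast (Nat.pos_of_dvd_of_pos he hg0).ne'
        have hg0' : (g : ℝ) ≠ 0 := by exact_mod_cast hg0.ne'
        rw [Nat.cast_div he he0]
        field_simp
      -- In terms of the codivisors `m = g / e` the weights are `g * (η m / m)`, and larger `e` means
      -- smaller `m`.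
      rw [hw e he]
      calc _ = ∑ e' ∈ g.divisors with e < e', (g : ℝ) * (η (g / e') / ((g / e' : ℕ) : ℝ)) :=
            sum_congr rfl fun e' he' => hw e' (Nat.dvd_of_mem_divisors (mem_filter.1 he').1)
        _ = g * ∑ m ∈ ({e' ∈ g.divisors | e < e'}).image (fun e' => g / e'), η m / m := by
            rw [sum_image, mul_sum]
            intro x hx y hy hxy
            have hx := Nat.dvd_of_mem_divisors (mem_filter.1 hx).1
            have hy := Nat.dvd_of_mem_divisors (mem_filter.1 hy).1
            rw [← Nat.div_div_self hx hg0.ne', ← Nat.div_div_self hy hg0.ne']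
            exact congrArg (g / ·) hxy
        _ ≤ g * ∑ m ∈ Ico 1 (g / e), η m / m := by
            refine mul_le_mul_of_nonneg_left ?_ (Nat.cast_nonneg _)
            refine sum_le_sum_of_subset_of_nonneg ?_ fun m hm _ =>
              div_nonneg (hbound m (mem_Ico.1 hm).1).1 (Nat.cast_nonneg _)
            intro m hm
            obtain ⟨e', he', rfl⟩ := mem_image.1 hm
            obtain ⟨hd, hlt⟩ := mem_filter.1 he'
            have hd := Nat.dvd_of_mem_divisors hd
            refine mem_Ico.2 ⟨hquot e' hd, ?_⟩
            exact (Nat.div_lt_div_left hg0.ne' hd he).2 hlt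
        _ ≤ _ := mul_le_mul_of_nonneg_left (hbound _ (hquot e he)).2.2 (Nat.cast_nonneg _)
  · intro h
    rw [h, ← hfj] at hfi
    exact_mod_cast mul_left_cancel₀ hNr hfi
end

section
/- Let n ≥ 1 and ℓ ≥ 2 be integers, and let 0 ≤ i ≤ n and 0 ≤ j ≤ ℓ−1 be integers such that gcd(n+1, ℓ, i) = gcd(ℓ, n+1, j) (greatest common divisor of the three integers). Then N_A(n, ℓ, i) = N_A(ℓ−1, n+1, j). (This is the level-rank duality for the numbers of dominant maximal weights of type A_n^{(1)}: exchanging n+1 with ℓ preserves these cardinalities.) -/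
/-!
Write `N = n + 1`, `L = ℓ`, `g = gcd(N, L)`, and view `m` as a multiset of `L` elements of `ℤ/N`
whose sum is prescribed.

* Translating `ℤ/N` by `1` changes the sum of the multiset by `L`, and the multiples of `L` in
  `ℤ/N` are those of `g`. Hence the number of multisets with sum `a` depends only on `a mod g`
  (`cnt_congr`), and counting sums modulo `N` is the same as counting them modulo `g`, up to the
  factor `N / g` (`coarse_eq`).
* Stars and bars: `a_1 ≤ a_2 ≤ ⋯ ≤ a_L` becomes `a_1 < a_2 + 1 < ⋯ < a_L + (L - 1)`, an `L`-subset of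
  `{0, …, N + L - 2}` with sum increased by `L.choose 2`. The resulting equidistribution
  (`stars_bars`) is proved by the Pascal-type recursion of Gaussian binomial coefficients.
* Such subsets are the `L`-subsets of `ℤ/(N+L)` avoiding `-1`. As `g ∣ L`, their sum modulo `g` is
  invariant under translation of `ℤ/(N+L)`, so double counting pairs (subset, point outside it)
  removes the condition of avoiding `-1` (`avoid_eq`).
* Together these give `(N + L) * cnt N L a = g * #{L-subsets of ℤ/(N+L) with sum a + L.choose 2
  mod g}` (`cnt_eq_subsetCnt`). The right-hand side is exchanged with that for `(L, N)` and `-a` by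
  taking complements (`cnt_duality`).
* Finally, multiplication by a unit of `ℤ/N` preserves the count (`cnt_unit`), units of `ℤ/g` lift
  to `ℤ/N`, and residues modulo `g` having the same gcd with `g` differ by a unit
  (`exists_unit_mul`).
-/

open Finset

/-! ### Stars and bars, keeping track of the sum -/

/-- The sum over `L`-subsets of `{0, …, n + L - 1}` and the weight of tuples `(m_0, …, m_n)` of total
`L`, shifted by `L.choose 2`, are equidistributed: an arbitrary test function `f` has the same
total on both sides. Both sides satisfy the same recursion, according to whether the largest
element `n + L - 1` belongs to the subset, respectively whether `m_n` is nonzero. -/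
theorem stars_bars (n L : ℕ) : ∀ f : ℕ → ℕ,
    ∑ S ∈ powersetCard L (range (n + L)), f (∑ x ∈ S, x) =
      ∑ m ∈ piAntidiag (range (n + 1)) L, f (L.choose 2 + ∑ r ∈ range (n + 1), r * m r) := by
  induction n generalizing L with
  | zero =>
    intro f
    have e : piAntidiag (range (0 + 1)) L = {Pi.single 0 L} := by
      ext m
      simp only [mem_piAntidiag, mem_range, mem_singleton, zero_add, sum_range_one]
      constructor
      · rintro ⟨h1, h2⟩
        ext i
        by_cases h : i = 0
        · subst h; simpa using h1
        · have : m i = 0 := by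
            by_contra h'; have := h2 i h'; omega
          simp [h, this]
      · rintro rfl
        refine ⟨by simp, fun i hi => ?_⟩
        by_contra h
        have : i ≠ 0 := by omega
        simp [this] at hi
    have e' : powersetCard L (range (0 + L)) = {range L} := by
      rw [zero_add]
      simpa using powersetCard_self (range L)
    rw [e, e']
    simp [Finset.sum_range_id, Nat.choose_two_right]
  | succ n ihn =>
    induction L with
    | zero => intro f; simp
    | succ L ihL =>
      intro f
      have e1 : range (n + 1 + (L + 1)) = insert (n + 1 + L) (range (n + 1 + L)) := by
        rw [← add_assoc, range_add_one]
      rw [e1, powersetCard_succ_insert (by simp), sum_union, sum_image]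
      · rw [← sum_filter_add_sum_filter_not (piAntidiag (range (n + 1 + 1)) (L + 1))
          (fun m => m (n + 1) = 0)]
        congr 1
        · have := ihn (L + 1) f
          rw [show n + (L + 1) = n + 1 + L by ring] at this
          rw [this]
          have e2 : (piAntidiag (range (n + 1 + 1)) (L + 1)).filter (fun m => m (n + 1) = 0)
              = piAntidiag (range (n + 1)) (L + 1) := by
            ext m
            simp only [mem_filter, mem_piAntidiag, mem_range]
            have h0 : (range (n + 1 + 1)).sum m = (range (n + 1)).sum m + m (n + 1) :=
              sum_range_succ m (n + 1)
            constructor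
            · rintro ⟨⟨h1, h2⟩, h3⟩
              refine ⟨by omega, fun i hi => ?_⟩
              have := h2 i hi
              rcases Nat.lt_succ_iff_lt_or_eq.1 this with h | h
              · exact h
              · subst h; contradiction
            · rintro ⟨h1, h2⟩
              have h3 : m (n + 1) = 0 := by
                by_contra h; have := h2 _ h; omega
              exact ⟨⟨by omega, fun i hi => by have := h2 i hi; omega⟩, h3⟩
          rw [e2]
          refine sum_congr rfl fun m hm => ?_
          rw [← e2, mem_filter] at hm
          rw [sum_range_succ _ (n + 1), hm.2]; simp
        · have := ihL (fun x => f (n + 1 + L + x))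
          calc _ = ∑ S ∈ powersetCard L (range (n + 1 + L)), f (n + 1 + L + ∑ x ∈ S, x) := by
                refine sum_congr rfl fun S hS => ?_
                rw [sum_insert]
                intro h
                have := (mem_powersetCard.1 hS).1 h
                simp at this
            _ = _ := by
                rw [this]
                refine sum_bij' (fun m _ => m + Pi.single (n + 1) 1)
                  (fun m _ => m - Pi.single (n + 1) 1) ?_ ?_ ?_ ?_ ?_
                · intro m hm
                  simp only [mem_filter, mem_piAntidiag, mem_range] at hm ⊢
                  refine ⟨⟨?_, ?_⟩, by simp⟩
                  · simp [sum_add_distrib, Finset.sum_pi_single', hm.1]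
                  · intro i hi
                    by_cases h : i = n + 1
                    · omega
                    · apply hm.2; simpa [h] using hi
                · intro m hm
                  simp only [mem_filter, mem_piAntidiag, mem_range] at hm ⊢
                  refine ⟨?_, ?_⟩
                  · have h1 := hm.1.1
                    rw [sum_range_succ] at h1 ⊢
                    have : ∑ i ∈ range (n + 1), (m - Pi.single (n + 1) 1 : ℕ → ℕ) i
                        = ∑ i ∈ range (n + 1), m i := by
                      refine sum_congr rfl fun i hi => ?_
                      have : i ≠ n + 1 := by have := mem_range.1 hi; omega
                      simp [this]
                    rw [this]
                    have := hm.2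
                    simp; omega
                  · intro i hi
                    apply hm.1.2
                    intro h; apply hi; simp [h]
                · intro m hm
                  simp
                · intro m hm
                  simp only [mem_filter] at hm
                  ext i
                  by_cases h : i = n + 1
                  · subst h; have := hm.2; simp; omega
                  · simp [h]
                · intro m hm
                  congr 1
                  simp only [Pi.add_apply, mul_add, sum_add_distrib]
                  have : ∑ r ∈ range (n + 1 + 1), r * (Pi.single (n + 1) 1 : ℕ → ℕ) r = n + 1 := by
                    rw [sum_range_succ, sum_eq_zero]
                    · simp
                    · intro i hi
                      have : i ≠ n + 1 := by have := mem_range.1 hi; omega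
                      simp [this]
                  rw [this, Nat.choose_succ_succ' L 1]
                  simp; ring
      · intro S hS T hT h
        have h1 : n + 1 + L ∉ S := fun h => by
          have := (mem_powersetCard.1 hS).1 h
          simp at this
        have h2 : n + 1 + L ∉ T := fun h => by
          have := (mem_powersetCard.1 hT).1 h
          simp at this
        rw [← erase_insert h1, ← erase_insert h2]; exact congrArg (fun U => erase U (n + 1 + L)) h
      · rw [disjoint_left]
        intro S hS hT
        obtain ⟨T, -, rfl⟩ := mem_image.1 hT
        have := (mem_powersetCard.1 hS).1 (mem_insert_self _ _)
        simp at this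

/-! ### Multisets in `ℤ/N` with prescribed sum -/

/-- Number of multisets of size `L` in `ℤ/N`, encoded by multiplicity functions `m`, whose sum
is `a`. -/
def cnt (N L : ℕ) [NeZero N] (a : ZMod N) : ℕ :=
  #{m ∈ piAntidiag (univ : Finset (ZMod N)) L | ∑ r, (m r : ZMod N) * r = a}

/-- Number of multisets of size `L` in `ℤ/N` whose sum reduces to `c` modulo `g`; meaningful for
`g ∣ N`, so that `ZMod.cast` is the reduction homomorphism. -/
def coarse (N L g : ℕ) [NeZero N] (c : ZMod g) : ℕ :=
  #{m ∈ piAntidiag (univ : Finset (ZMod N)) L |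
    ((∑ r, (m r : ZMod N) * r : ZMod N).cast : ZMod g) = c}

/-- Number of `L`-element subsets of `ℤ/K` whose sum reduces to `c` modulo `g`; meaningful for
`g ∣ K`, so that `ZMod.cast` is the reduction homomorphism. -/
def subsetCnt (K L g : ℕ) [NeZero K] (c : ZMod g) : ℕ :=
  #{S ∈ powersetCard L (univ : Finset (ZMod K)) | ∑ x ∈ S, (x.cast : ZMod g) = c}

theorem weight_eq_cast (n : ℕ) (m : Fin (n + 1) → ℕ) :
    ∑ r : ZMod (n + 1), ((m r : ℕ) : ZMod (n + 1)) * r =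
      ((∑ r : Fin (n + 1), (r : ℕ) * m r : ℕ) : ZMod (n + 1)) := by
  rw [Nat.cast_sum]
  refine sum_congr rfl fun r _ => ?_
  rw [Nat.cast_mul, mul_comm]
  congr 1
  exact (ZMod.natCast_zmod_val r).symm

theorem NA_eq_cnt (n ℓ i : ℕ) : NA n ℓ i = cnt (n + 1) ℓ (i : ZMod (n + 1)) := by
  unfold NA cnt
  change _ = #{m ∈ piAntidiag (univ : Finset (Fin (n + 1))) ℓ |
    ∑ r : ZMod (n + 1), ((m r : ℕ) : ZMod (n + 1)) * r = i}
  congr 1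
  ext m
  have key : (∑ r : ZMod (n + 1), ((m r : ℕ) : ZMod (n + 1)) * r = i) ↔
      (∑ r : Fin (n + 1), (r : ℕ) * m r) % (n + 1) = i % (n + 1) := by
    rw [weight_eq_cast, ZMod.natCast_eq_natCast_iff]
    rfl
  simp only [mem_filter, Fintype.mem_piFinset, mem_range, mem_piAntidiag, mem_univ, implies_true,
    and_true]
  rw [← key]
  constructor
  · rintro ⟨-, h⟩; exact h
  · rintro ⟨h1, h2⟩
    refine ⟨fun r => ?_, h1, h2⟩
    have : m r ≤ univ.sum m := single_le_sum (f := m) (fun _ _ => Nat.zero_le _) (mem_univ r)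
    omega

section
variable {N L g : ℕ} [NeZero N]

/-- Relabelling the elements of `ℤ/N` by a permutation `e` gives a bijection of multisets. -/
theorem cnt_equiv (e : ZMod N ≃ ZMod N) (a b : ZMod N)
    (h : ∀ m : ZMod N → ℕ, ∑ r, m r = L →
      (∑ r, (m r : ZMod N) * r = a ↔ ∑ r, (m r : ZMod N) * e r = b)) :
    cnt N L a = cnt N L b := by
  unfold cnt
  refine card_bij' (fun m _ => m ∘ e.symm) (fun m _ => m ∘ e) ?_ ?_ ?_ ?_
  · intro m hm
    simp only [mem_filter, mem_piAntidiag, mem_univ, implies_true, and_true] at hm ⊢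
    refine ⟨?_, ?_⟩
    · rw [← hm.1]; exact Equiv.sum_comp e.symm m
    · rw [← (h m hm.1).1 hm.2, ← Equiv.sum_comp e]; simp
  · intro m hm
    simp only [mem_filter, mem_piAntidiag, mem_univ, implies_true, and_true] at hm ⊢
    have h1 : ∑ r, (m ∘ e) r = L := by rw [← hm.1]; exact Equiv.sum_comp e m
    refine ⟨h1, ?_⟩
    rw [h _ h1, ← hm.2, ← Equiv.sum_comp e (fun r => (m r : ZMod N) * r)]; simp
  · intro m _; ext; simp
  · intro m _; ext; simp

theorem cnt_unit (u : (ZMod N)ˣ) (a : ZMod N) : cnt N L a = cnt N L (u * a) := by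
  refine cnt_equiv (Units.mulLeft u) _ _ fun m _ => ?_
  have : ∑ r, (m r : ZMod N) * (Units.mulLeft u) r = u * ∑ r, (m r : ZMod N) * r := by
    rw [mul_sum]; refine sum_congr rfl fun r _ => ?_
    simp; ring
  rw [this, Units.mul_right_inj]

theorem cnt_shift (t : ZMod N) (a : ZMod N) : cnt N L a = cnt N L (a + L * t) := by
  refine cnt_equiv (Equiv.addRight t) _ _ fun m hm => ?_
  have : ∑ r, (m r : ZMod N) * (Equiv.addRight t) r = (∑ r, (m r : ZMod N) * r) + L * t := by
    simp only [Equiv.coe_addRight, mul_add, sum_add_distrib, ← sum_mul]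
    rw [← hm]; push_cast; rfl
  rw [this, add_left_inj]

/-- The number of multisets with sum `a` depends only on `a` modulo `gcd(N, L)`: by Bézout, `g` is a
multiple of `L` in `ℤ/N`, so that `cnt_shift` reaches every element of the class. -/
theorem cnt_congr (hg : g = N.gcd L) {a b : ZMod N} (h : (a.cast : ZMod g) = b.cast) :
    cnt N L a = cnt N L b := by
  have hd : g ∣ N := hg ▸ Nat.gcd_dvd_left _ _
  have h1 : ((b.val : ℤ) : ZMod g) = ((a.val : ℤ) : ZMod g) := by
    simpa [ZMod.natCast_val] using h.symm
  rw [ZMod.intCast_eq_intCast_iff, Int.modEq_iff_dvd] at h1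
  obtain ⟨k, hk⟩ := h1
  have h2 := Nat.gcd_eq_gcd_ab N L
  rw [← hg] at h2
  rw [cnt_shift (-(N.gcdB L * k : ℤ) : ZMod N) a]
  congr 1
  have h3 : ((g : ℤ) : ZMod N) = L * (N.gcdB L : ZMod N) := by
    rw [h2]; simp
  have h4 := congrArg (Int.cast : ℤ → ZMod N) hk
  push_cast at h3 h4 ⊢
  rw [ZMod.natCast_zmod_val, ZMod.natCast_zmod_val, h3] at h4
  linear_combination h4

/-- Each of the `N / g` sums in `ℤ/N` lying over a class modulo `g` is attained equally often. -/
theorem coarse_eq (hg : g = N.gcd L) (a : ZMod N) :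
    g * coarse N L g (a.cast) = N * cnt N L a := by
  have hd : g ∣ N := hg ▸ Nat.gcd_dvd_left _ _
  have hg0 : NeZero g := ⟨fun h => NeZero.ne N (by rw [h] at hd; exact zero_dvd_iff.1 hd)⟩
  have h1 : coarse N L g (a.cast) = #{b : ZMod N | (b.cast : ZMod g) = a.cast} * cnt N L a := by
    unfold coarse
    rw [card_eq_sum_card_fiberwise (t := {b : ZMod N | (b.cast : ZMod g) = a.cast})
      (f := fun m => ∑ r, (m r : ZMod N) * r), ← smul_eq_mul, ← sum_const]
    · refine sum_congr rfl fun b hb => ?_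
      simp only [mem_filter, mem_univ, true_and] at hb
      rw [← cnt_congr hg hb, cnt]
      congr 1
      ext m
      simp only [mem_filter]
      constructor
      · rintro ⟨⟨h1, h2⟩, h3⟩; exact ⟨h1, h3⟩
      · rintro ⟨h1, h3⟩; exact ⟨⟨h1, by rw [h3, hb]⟩, h3⟩
    · intro m hm
      simpa using (mem_filter.1 hm).2
  have h2 : g * #{b : ZMod N | (b.cast : ZMod g) = a.cast} = N := by
    have h3 := card_eq_sum_card_fiberwise (s := (univ : Finset (ZMod N)))
      (t := (univ : Finset (ZMod g))) (f := fun b => (b.cast : ZMod g)) (by intro; simp)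
    rw [sum_congr rfl (g := fun _ => #{b : ZMod N | (b.cast : ZMod g) = a.cast})] at h3
    · simpa [ZMod.card] using h3.symm
    · intro c _
      exact AddMonoidHom.card_fiber_eq_of_mem_range (ZMod.castHom hd (ZMod g)).toAddMonoidHom
        (ZMod.castHom_surjective hd c) ⟨a, rfl⟩
  rw [h1, ← mul_assoc, h2]

end

/-! ### Subsets of a cyclic group with prescribed sum -/

theorem coarse_eq_range (n L g : ℕ) (hd : g ∣ n + 1) (c : ZMod g) :
    coarse (n + 1) L g c = #{S ∈ powersetCard L (range (n + L)) |
      ((∑ x ∈ S, x : ℕ) : ZMod g) = c + (L.choose 2 : ℕ)} := by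
  rw [card_filter, stars_bars n L (fun x => if (x : ZMod g) = c + (L.choose 2 : ℕ) then 1 else 0),
    ← card_filter]
  unfold coarse
  change #{m ∈ piAntidiag (univ : Finset (Fin (n + 1))) L |
    ((∑ r : ZMod (n + 1), ((m r : ℕ) : ZMod (n + 1)) * r : ZMod (n + 1)).cast : ZMod g) = c} = _
  simp only [weight_eq_cast, ZMod.cast_natCast hd]
  refine card_bij' (fun m _ k => if h : k < n + 1 then m ⟨k, h⟩ else 0)
    (fun m _ r => m r) ?_ ?_ ?_ ?_
  · intro m hm
    simp only [mem_filter, mem_piAntidiag, mem_univ, implies_true, and_true] at hm ⊢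
    have hx : ∀ r : Fin (n + 1), (if h : (r : ℕ) < n + 1 then m ⟨r, h⟩ else 0) = m r :=
      fun r => dif_pos r.2
    refine ⟨⟨?_, ?_⟩, ?_⟩
    · rw [← hm.1, sum_range]; simp only [hx]
    · intro i hi
      by_contra h
      exact hi (dif_neg fun h' => h (mem_range.2 h'))
    · rw [← hm.2, sum_range, Nat.cast_add, add_comm]; simp only [hx]
  · intro m hm
    simp only [mem_filter, mem_piAntidiag, mem_univ, implies_true, and_true] at hm ⊢
    refine ⟨by rw [← hm.1.1, sum_range], ?_⟩
    have := hm.2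
    rw [sum_range, Nat.cast_add, add_comm] at this
    exact add_right_cancel this
  · intro m _; ext r; exact dif_pos r.2
  · intro m hm
    simp only [mem_filter, mem_piAntidiag] at hm
    ext k
    by_cases h : k < n + 1
    · simp [h]
    · have : m k = 0 := by
        by_contra h'; exact h (mem_range.1 (hm.1.2 k h'))
      simp [h, this]

/-- `{0, …, K - 1}` is identified with the complement of `-1` in `ℤ/(K+1)`. -/
theorem range_eq_avoid (K L g : ℕ) (c : ZMod g) :
    #{S ∈ powersetCard L (range K) | ((∑ x ∈ S, x : ℕ) : ZMod g) = c} =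
    #{S ∈ powersetCard L (univ : Finset (ZMod (K + 1))) |
      (∑ x ∈ S, (x.cast : ZMod g) = c) ∧ (-1 : ZMod (K + 1)) ∉ S} := by
  have hv : ∀ x : ZMod (K + 1), x ≠ -1 ↔ x.val < K := by
    intro x
    have h1 := x.val_lt
    have h2 : (-1 : ZMod (K + 1)).val = K := ZMod.val_neg_one K
    rw [← (ZMod.val_injective (K + 1)).ne_iff, h2]; omega
  symm
  refine card_bij' (fun S _ => S.image ZMod.val)
    (fun S _ => S.image (fun k : ℕ => (k : ZMod (K + 1)))) ?_ ?_ ?_ ?_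
  · intro S hS
    simp only [mem_filter, mem_powersetCard, subset_univ, true_and] at hS ⊢
    obtain ⟨h1, h2, h3⟩ := hS
    refine ⟨⟨?_, ?_⟩, ?_⟩
    · intro k hk
      obtain ⟨x, hx, rfl⟩ := mem_image.1 hk
      exact mem_range.2 ((hv x).1 (by rintro rfl; exact h3 hx))
    · rw [card_image_of_injective _ (ZMod.val_injective _), h1]
    · rw [sum_image (ZMod.val_injective _).injOn, ← h2]
      push_cast
      simp [ZMod.natCast_val]
  · intro S hS
    simp only [mem_filter, mem_powersetCard, subset_univ, true_and] at hS ⊢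
    obtain ⟨⟨h1, h2⟩, h3⟩ := hS
    have hval : ∀ k ∈ S, (k : ZMod (K + 1)).val = k := fun k hk =>
      ZMod.val_natCast_of_lt (by have := mem_range.1 (h1 hk); omega)
    have hinj : Set.InjOn (fun k : ℕ => (k : ZMod (K + 1))) S := by
      intro k hk l hl h
      rw [← hval k hk, ← hval l hl]; exact congrArg _ h
    refine ⟨?_, ?_, ?_⟩
    · rw [card_image_of_injOn hinj, h2]
    · rw [sum_image hinj, ← h3]
      push_cast
      refine sum_congr rfl fun k hk => ?_
      rw [← ZMod.natCast_val, hval k hk]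
    · intro h
      obtain ⟨k, hk, h⟩ := mem_image.1 h
      have := (hv (k : ZMod (K + 1))).2 (by rw [hval k hk]; exact mem_range.1 (h1 hk))
      exact this h
  · intro S _
    rw [image_image]
    simp [Function.comp_def]
  · intro S hS
    simp only [mem_filter, mem_powersetCard] at hS
    rw [image_image]
    conv_rhs => rw [← image_id (s := S)]
    refine image_congr fun k hk => ?_
    exact ZMod.val_natCast_of_lt (by have := mem_range.1 (hS.1.1 hk); omega)

/-- Double counting of pairs (subset, point outside it). The number of subsets avoiding a point does
not depend on the point, because translations preserve the sum modulo `g` when `g ∣ L`. -/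
theorem avoid_eq (K L g : ℕ) [NeZero K] (hK : g ∣ K) (hL : g ∣ L) (c : ZMod g) (y : ZMod K) :
    K * #{S ∈ powersetCard L (univ : Finset (ZMod K)) |
      (∑ x ∈ S, (x.cast : ZMod g) = c) ∧ y ∉ S} = (K - L) * subsetCnt K L g c := by
  have hL' : (L : ZMod g) = 0 := (ZMod.natCast_eq_zero_iff _ _).2 hL
  have h1 := sum_card_bipartiteAbove_eq_sum_card_bipartiteBelow (s := (univ : Finset (ZMod K)))
    (t := {S ∈ powersetCard L (univ : Finset (ZMod K)) | ∑ x ∈ S, (x.cast : ZMod g) = c})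
    (fun y S => y ∉ S)
  rw [sum_congr rfl (g := fun _ => #{S ∈ powersetCard L (univ : Finset (ZMod K)) |
      (∑ x ∈ S, (x.cast : ZMod g) = c) ∧ y ∉ S}), sum_const, card_univ, ZMod.card,
      smul_eq_mul] at h1
  · rw [h1, sum_congr rfl (g := fun _ => K - L)]
    · rw [sum_const, smul_eq_mul, mul_comm]; rfl
    · intro S hS
      simp only [mem_filter, mem_powersetCard] at hS
      have : bipartiteBelow (fun (y : ZMod K) S => y ∉ S) univ S = Sᶜ := by
        ext; simp [bipartiteBelow]
      rw [this, card_compl, ZMod.card, hS.1.2]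
  · intro z _
    have hsum : ∀ (S : Finset (ZMod K)) (t : ZMod K), #S = L →
        ∑ x ∈ S.map (Equiv.addRight t).toEmbedding, (x.cast : ZMod g) =
          ∑ x ∈ S, (x.cast : ZMod g) := by
      intro S t hS
      rw [sum_map]
      simp only [Equiv.coe_toEmbedding, Equiv.coe_addRight, ZMod.cast_add hK, sum_add_distrib,
        sum_const, hS, nsmul_eq_mul, hL', zero_mul, add_zero]
    refine card_bij' (fun S _ => S.map (Equiv.addRight (y - z)).toEmbedding)
      (fun S _ => S.map (Equiv.addRight (z - y)).toEmbedding) ?_ ?_ ?_ ?_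
    · intro S hS
      simp only [bipartiteAbove, mem_filter, mem_powersetCard, subset_univ, true_and] at hS ⊢
      rw [card_map, hsum S _ hS.1.1]
      exact ⟨hS.1.1, hS.1.2, by simpa using hS.2⟩
    · intro S hS
      simp only [bipartiteAbove, mem_filter, mem_powersetCard, subset_univ, true_and] at hS ⊢
      rw [card_map, hsum S _ hS.1]
      exact ⟨⟨hS.1, hS.2.1⟩, by simpa using hS.2.2⟩
    · intro S _
      rw [map_map]; ext; simp
    · intro S _
      rw [map_map]; ext; simp

theorem subsetCnt_compl (K L M g : ℕ) [NeZero K] (hK : K = L + M) (hg : g ∣ K) (c : ZMod g) :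
    subsetCnt K L g c = subsetCnt K M g ((K.choose 2 : ℕ) - c) := by
  have htot : ∑ x : ZMod K, (x.cast : ZMod g) = (K.choose 2 : ℕ) := by
    obtain ⟨k, rfl⟩ := Nat.exists_eq_succ_of_ne_zero (NeZero.ne K)
    rw [Nat.choose_two_right, ← Finset.sum_range_id, sum_range, Nat.cast_sum]
    exact sum_congr rfl fun x _ => (ZMod.natCast_val (n := k + 1) x).symm
  have hc : ∀ S : Finset (ZMod K), ∑ x ∈ Sᶜ, (x.cast : ZMod g) =
      (K.choose 2 : ℕ) - ∑ x ∈ S, (x.cast : ZMod g) := by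
    intro S
    rw [← htot, ← sum_compl_add_sum S]; ring
  unfold subsetCnt
  refine card_bij' (fun S _ => Sᶜ) (fun S _ => Sᶜ) ?_ ?_ ?_ ?_
  · intro S hS
    simp only [mem_filter, mem_powersetCard, subset_univ, true_and] at hS ⊢
    rw [hc, card_compl, ZMod.card, hS.1, hS.2]
    exact ⟨by omega, rfl⟩
  · intro S hS
    simp only [mem_filter, mem_powersetCard, subset_univ, true_and] at hS ⊢
    rw [hc, card_compl, ZMod.card, hS.1, hS.2]
    exact ⟨by omega, by ring⟩
  · intro S _; simp
  · intro S _; simp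

/-! ### Duality -/

/-- An expression of the multiset count which is symmetric in `N` and `L` up to complementation of
subsets. -/
theorem cnt_eq_subsetCnt (N L g : ℕ) [NeZero N] [NeZero (N + L)] (hg : g = N.gcd L) (a : ZMod N) :
    (N + L) * cnt N L a = g * subsetCnt (N + L) L g (a.cast + (L.choose 2 : ℕ)) := by
  have hN : g ∣ N := hg ▸ Nat.gcd_dvd_left _ _
  have hL : g ∣ L := hg ▸ Nat.gcd_dvd_right _ _
  obtain ⟨n, rfl⟩ := Nat.exists_eq_succ_of_ne_zero (NeZero.ne N)
  have h1 := coarse_eq hg a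
  have h2 := coarse_eq_range n L g hN (a.cast)
  rw [range_eq_avoid] at h2
  -- `K` is kept abstract to pass between the types `ZMod (n + L + 1)` and `ZMod (n + 1 + L)`.
  have h3 : ∀ K, K = n + L + 1 → ∀ [NeZero K], g ∣ K → K * coarse (n + 1) L g (a.cast) =
      (n + 1) * subsetCnt K L g (a.cast + (L.choose 2 : ℕ)) := by
    rintro _ rfl _ hK
    rw [h2, avoid_eq _ _ _ hK hL]
    congr 1; omega
  have h4 := h3 (n + 1 + L) (by ring) (dvd_add hN hL)
  have : (n + 1) * ((n + 1 + L) * cnt (n + 1) L a) =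
    (n + 1) * (g * subsetCnt (n + 1 + L) L g (a.cast + (L.choose 2 : ℕ))) := by
    rw [mul_left_comm, ← h1, mul_left_comm, h4]; ring
  exact Nat.eq_of_mul_eq_mul_left (Nat.succ_pos n) this

theorem cnt_duality (N L g : ℕ) [NeZero N] [NeZero L] (hg : g = N.gcd L) (a : ZMod N) (b : ZMod L)
    (h : (b.cast : ZMod g) = -a.cast) : cnt N L a = cnt L N b := by
  have hN : g ∣ N := hg ▸ Nat.gcd_dvd_left _ _
  have hL : g ∣ L := hg ▸ Nat.gcd_dvd_right _ _
  have h1 := cnt_eq_subsetCnt N L g hg a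
  have h2 := cnt_eq_subsetCnt L N g (by rw [hg, Nat.gcd_comm]) b
  -- `K` is kept abstract to pass between the types `ZMod (N + L)` and `ZMod (L + N)`.
  have h3 : ∀ K, K = N + L → ∀ [NeZero K],
      subsetCnt K N g (b.cast + (N.choose 2 : ℕ)) =
      subsetCnt (N + L) N g (b.cast + (N.choose 2 : ℕ)) := by
    rintro _ rfl _; rfl
  rw [h3 _ (add_comm L N)] at h2
  rw [subsetCnt_compl (N + L) L N g (add_comm N L) (dvd_add hN hL)] at h1
  have h4 : (((N + L).choose 2 : ℕ) : ZMod g) - (a.cast + (L.choose 2 : ℕ)) =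
      b.cast + (N.choose 2 : ℕ) := by
    -- The cross term `N * L` vanishes modulo `g`.
    have h5 : (N + L).choose 2 = N.choose 2 + N * L + L.choose 2 := by
      rw [Nat.add_choose_eq]
      simp [Nat.antidiagonal_succ]; ring
    have h6 : (N : ZMod g) = 0 := (ZMod.natCast_eq_zero_iff _ _).2 hN
    rw [h5, h]; push_cast; rw [h6]; ring
  rw [h4, ← h2, add_comm L N] at h1
  exact Nat.eq_of_mul_eq_mul_left (by have := NeZero.pos N; omega) h1

/-- Every residue modulo `g` is a unit multiple of its gcd with `g`. -/
theorem exists_unit_mul (g i : ℕ) [NeZero g] :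
    ∃ u : (ZMod g)ˣ, (i : ZMod g) = u * (g.gcd i : ℕ) := by
  obtain ⟨d, hd, u, hu, h⟩ := (i : ZMod g).eq_unit_mul_divisor
  obtain ⟨u, rfl⟩ := hu
  refine ⟨u, ?_⟩
  have : g.gcd i = d := by
    apply Nat.dvd_antisymm
    · have h1 : (d : ZMod g) = (((u⁻¹ : (ZMod g)ˣ) : ZMod g).val * i : ℕ) := by
        rw [Nat.cast_mul, ZMod.natCast_zmod_val, h, Units.inv_mul_cancel_left]
      rw [ZMod.natCast_eq_natCast_iff] at h1
      exact (h1.dvd_iff (Nat.gcd_dvd_left g i)).2 ((Nat.gcd_dvd_right g i).mul_left _)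
    · refine Nat.dvd_gcd hd ?_
      have h1 : (i : ZMod g) = ((u : ZMod g).val * d : ℕ) := by
        rw [Nat.cast_mul, ZMod.natCast_zmod_val, h]
      rw [ZMod.natCast_eq_natCast_iff] at h1
      exact (h1.dvd_iff hd).2 (Dvd.intro_left _ rfl)
  rw [this, h]

/-- **Level-rank duality in type `A_n^(1)`.** For `n ≥ 1`, `ℓ ≥ 2`, `0 ≤ i ≤ n` and
`0 ≤ j ≤ ℓ-1` with `gcd(n+1,ℓ,i) = gcd(ℓ,n+1,j)`, we have
`NA(n,ℓ,i) = NA(ℓ-1,n+1,j)`. -/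
theorem stmt_17 (n ℓ i j : ℕ) (hn : 1 ≤ n) (hℓ : 2 ≤ ℓ) (hi : i ≤ n) (hj : j ≤ ℓ - 1)
    (hgcd : Nat.gcd (n + 1) (Nat.gcd ℓ i) = Nat.gcd ℓ (Nat.gcd (n + 1) j)) :
    NA n ℓ i = NA (ℓ - 1) (n + 1) j := by
  obtain ⟨l, rfl⟩ : ∃ l, ℓ = l + 1 := ⟨ℓ - 1, by omega⟩
  rw [NA_eq_cnt, NA_eq_cnt, Nat.add_sub_cancel]
  obtain ⟨g, hg⟩ : ∃ g, g = (n + 1).gcd (l + 1) := ⟨_, rfl⟩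
  have hN : g ∣ n + 1 := hg ▸ Nat.gcd_dvd_left _ _
  have hL : g ∣ l + 1 := hg ▸ Nat.gcd_dvd_right _ _
  have : NeZero g := ⟨by rw [hg]; exact (Nat.gcd_pos_of_pos_left _ (Nat.succ_pos n)).ne'⟩
  rw [← Nat.gcd_assoc, ← Nat.gcd_assoc, Nat.gcd_comm (l + 1), ← hg] at hgcd
  obtain ⟨u, hu⟩ := exists_unit_mul g i
  obtain ⟨v, hv⟩ := exists_unit_mul g j
  -- Multiplication by `-v / u` sends `i` to `-j` modulo `g`, absorbing the sign in the duality.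
  obtain ⟨w, hw⟩ := ZMod.unitsMap_surjective hN (-(v * u⁻¹))
  rw [cnt_unit w]
  refine cnt_duality _ _ g hg _ _ ?_
  rw [ZMod.cast_mul hN, ← ZMod.unitsMap_val hN, hw, ZMod.cast_natCast hN, ZMod.cast_natCast hL,
    hu, hv, hgcd]
  simp [mul_assoc]
end
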